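/- Let n ≥ 3. There exists a constant a₁ > 0 depending only on n such that for every smooth ℤⁿ-periodic real-valued eigenfunction ψ : ℝⁿ → ℝ of the Euclidean Laplacian with eigenvalue λ ≥ 1, every nodal domain Ω of ψ satisfies in(Ω) ≥ a₁ λ^{-1/2-(n-1)(n-2)/(4n)}. -/

import Mathlib

open MeasureTheory Metric Filter Real

noncomputable section

/-- `ψ : ℝⁿ → ℝ` is `ℤⁿ`-periodic: `ψ (x + v) = ψ x` for every integer vector `v`. -/
def ZnPeriodic (n : ℕ) (ψ : EuclideanSpace ℝ (Fin n) → ℝ) : Prop :=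
  ∀ (x : EuclideanSpace ℝ (Fin n)) (v : Fin n → ℤ),
    ψ (show EuclideanSpace ℝ (Fin n) from WithLp.toLp 2 fun i => x i + (v i : ℝ)) = ψ x

/-- The Euclidean Laplacian `Δψ = ∑ᵢ ∂²ψ/∂xᵢ²`. -/
def lap (n : ℕ) (ψ : EuclideanSpace ℝ (Fin n) → ℝ) (x : EuclideanSpace ℝ (Fin n)) : ℝ :=
  ∑ i : Fin n,
    fderiv ℝ (fun y => fderiv ℝ ψ y (EuclideanSpace.single i (1:ℝ))) x
      (EuclideanSpace.single i (1:ℝ))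

/-- `Ω` is a nodal domain of `ψ`: a connected component of `{ψ ≠ 0}`. -/
def IsNodalDomain {n : ℕ} (ψ : EuclideanSpace ℝ (Fin n) → ℝ)
    (Ω : Set (EuclideanSpace ℝ (Fin n))) : Prop :=
  ∃ x, ψ x ≠ 0 ∧ Ω = connectedComponentIn {y | ψ y ≠ 0} x

/-- The inner radius of a set: the supremum of radii of open balls contained in it. -/
def innerRadius {n : ℕ} (Ω : Set (EuclideanSpace ℝ (Fin n))) : ℝ :=
  sSup {ρ : ℝ | 0 < ρ ∧ ∃ c, Metric.ball c ρ ⊆ Ω}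

/-- The fundamental domain `[0,1)ⁿ` of the torus `ℝⁿ/ℤⁿ`. -/
def fundDom (n : ℕ) : Set (EuclideanSpace ℝ (Fin n)) :=
  {x | ∀ i, x i ∈ Set.Ico (0:ℝ) 1}

/-- `S ⊆ ℕ` has full density: `#(S ∩ [1,N]) / N → 1`. -/
def FullDensity (S : Set ℕ) : Prop :=
  Filter.Tendsto (fun N => (Nat.card ↥(S ∩ Set.Icc 1 N) : ℝ) / N) Filter.atTop (nhds 1)

/-!
Let `d` be a small radius, let `x₀` be a point of a nodal domain `Ω` at which `ψ > 0` nearly attains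
its supremum, and suppose that `ψ` vanishes at some `z` within distance `d` of `x₀`.

* A periodic eigenfunction restricts to a trigonometric polynomial of degree at most about `√λ` on
  every line parallel to the `i`-th axis: a Fourier coefficient `u` of `ψ` along such lines of
  frequency `ω > √λ` satisfies `∂ᵢ²u = -ω²u` and `Δu = -λu`, so `u ≤ 0` at its maximum,
  and likewise `-u ≤ 0`. The Remez inequality then bounds the growth of `ψ` between concentric balls
  by `2 ^ B` with `B = O(√λ)`.
* Pigeonholing this growth over thin concentric shells around `z` leaves, for `ℓ ^ n` comparable
  with `B`, about `ℓ ^ (n - 2)` shells of width `d / ℓ ^ n`, separated by `d / ℓ ^ (n - 2)`, across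
  which the maximum of `-ψ` at most doubles. By the Harnack inequality `ψ < 0` on a ball of radius
  comparable with `d / ℓ ^ n` around the maximum point of each of them.
* Placing a Newtonian charge at each of these points, outside `Ω`, and comparing with `ψ` on
  `Ω ∩ ball x₀ (6 * d)` by the maximum principle shows that `ψ x₀` falls too far short of the
  supremum unless `1 ≤ C * ℓ ^ ((n - 1) * (n - 2)) * λ * d ^ 2`.

So `ball x₀ d ⊆ Ω` as soon as `d` is a small multiple of `λ ^ (-1/2 - (n - 1) * (n - 2) / (4 * n))`.
-/

open InnerProductSpace Laplacian Module
open scoped Topology FourierTransform RealInnerProductSpace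

section MaximumPrinciple

theorem iteratedDeriv_two_nonpos_of_isLocalMax {g : ℝ → ℝ} {t : ℝ} (hc : ContinuousAt g t)
    (hm : IsLocalMax g t) : iteratedDeriv 2 g t ≤ 0 := by
  rw [iteratedDeriv_succ, iteratedDeriv_one]
  by_contra! hpos
  have hmin : IsLocalMin g t := isLocalMin_of_deriv_deriv_pos hpos hm.deriv_eq_zero hc
  have hconst : g =ᶠ[𝓝 t] fun _ => g t := by
    filter_upwards [hm, hmin] with s h₁ h₂ using le_antisymm h₁ h₂
  simp [hconst.deriv.deriv_eq] at hpos

theorem iteratedDeriv_two_comp_line {E : Type*} [NormedAddCommGroup E] [NormedSpace ℝ E]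
    {f : E → ℝ} {x v : E} {t : ℝ} (hf : ContDiffAt ℝ 2 f (x + t • v)) :
    iteratedDeriv 2 (fun s : ℝ => f (x + s • v)) t = iteratedFDeriv ℝ 2 f (x + t • v) ![v, v] := by
  have hline : deriv (fun s : ℝ => x + s • v) = fun _ => v := by
    funext s
    simpa using (((hasDerivAt_id s).smul_const v).const_add x).deriv
  have hcomp := iteratedDeriv_vcomp_two (f := fun s : ℝ => x + s • v) hf (by fun_prop)
  have hline_two : iteratedDeriv 2 (fun s : ℝ => x + s • v) t = 0 := by
    simp [iteratedDeriv_succ, hline]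
  rw [hline, hline_two, map_zero, add_zero] at hcomp
  rw [show ![v, v] = fun _ => v by ext i; fin_cases i <;> rfl]
  exact hcomp

variable {E : Type*} [NormedAddCommGroup E] [InnerProductSpace ℝ E]

theorem contDiff_norm_sub_sq (p : E) : ContDiff ℝ 2 fun x => ‖x - p‖ ^ 2 :=
  (contDiff_id.sub contDiff_const).norm_sq ℝ

variable [FiniteDimensional ℝ E]

theorem laplacian_eq_sum_iteratedDeriv_two_line {ι : Type*} [Fintype ι]
    (b : OrthonormalBasis ι ℝ E) {f : E → ℝ} {x : E} (hf : ContDiffAt ℝ 2 f x) :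
    Δ f x = ∑ i, iteratedDeriv 2 (fun s : ℝ => f (x + s • b i)) 0 := by
  rw [laplacian_eq_iteratedFDeriv_orthonormalBasis f b]
  refine Finset.sum_congr rfl fun i _ => ?_
  rw [iteratedDeriv_two_comp_line (by simpa using hf), zero_smul, add_zero]

theorem laplacian_nonpos_of_isLocalMax {f : E → ℝ} {x : E} (hf : ContDiffAt ℝ 2 f x)
    (hm : IsLocalMax f x) : Δ f x ≤ 0 := by
  rw [laplacian_eq_sum_iteratedDeriv_two_line (stdOrthonormalBasis ℝ E) hf]
  refine Finset.sum_nonpos fun i _ => ?_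
  have hline : Tendsto (fun s : ℝ => x + s • stdOrthonormalBasis ℝ E i) (𝓝 0) (𝓝 x) := by
    have : ContinuousAt (fun s : ℝ => x + s • stdOrthonormalBasis ℝ E i) 0 := by fun_prop
    simpa using this.tendsto
  refine iteratedDeriv_two_nonpos_of_isLocalMax ?_ ?_
  · simpa [ContinuousAt, Function.comp_def] using hf.continuousAt.tendsto.comp hline
  · filter_upwards [hline.eventually hm] with s hs
    simpa using hs

theorem le_of_laplacian_pos_of_frontier_le {U : Set E} (hbdd : Bornology.IsBounded U)
    (hopen : IsOpen U) {F : E → ℝ} (hcont : ContinuousOn F (closure U))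
    (hdiff : ∀ y ∈ U, ContDiffAt ℝ 2 F y) (hpos : ∀ y ∈ U, 0 < Δ F y) {C : ℝ}
    (hC : ∀ y ∈ frontier U, F y ≤ C) {x : E} (hx : x ∈ U) : F x ≤ C := by
  obtain ⟨y, hy, hmax⟩ :=
    hbdd.isCompact_closure.exists_isMaxOn ⟨x, subset_closure hx⟩ hcont
  refine (hmax (subset_closure hx)).trans (hC y ⟨hy, fun hyU => ?_⟩)
  rw [hopen.interior_eq] at hyU
  have hlocal : IsLocalMax F y :=
    (hmax.on_subset subset_closure).isLocalMax (hopen.mem_nhds hyU)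
  exact (laplacian_nonpos_of_isLocalMax (hdiff y hyU) hlocal).not_gt (hpos y hyU)

theorem laplacian_comp_norm_sub_sq {φ : ℝ → ℝ} {p y : E} (hφ : ContDiffAt ℝ 2 φ (‖y - p‖ ^ 2)) :
    Δ (fun x => φ (‖x - p‖ ^ 2)) y = 4 * iteratedDeriv 2 φ (‖y - p‖ ^ 2) * ‖y - p‖ ^ 2
      + 2 * finrank ℝ E * deriv φ (‖y - p‖ ^ 2) := by
  set b := stdOrthonormalBasis ℝ E
  have hdiff : ContDiffAt ℝ 2 (fun x => φ (‖x - p‖ ^ 2)) y :=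
    hφ.comp y (contDiff_norm_sub_sq p).contDiffAt
  have hsecond (i) : iteratedDeriv 2 (fun s : ℝ => φ (‖y + s • b i - p‖ ^ 2)) 0
      = iteratedDeriv 2 φ (‖y - p‖ ^ 2) * (2 * ⟪b i, y - p⟫) ^ 2 + deriv φ (‖y - p‖ ^ 2) * 2 := by
    set q : ℝ → ℝ := fun s => ‖y - p‖ ^ 2 + 2 * ⟪b i, y - p⟫ * s + s ^ 2 with hq
    have hline (s : ℝ) : ‖y + s • b i - p‖ ^ 2 = q s := by
      rw [add_sub_right_comm, norm_add_sq_real, inner_smul_right, norm_smul, b.norm_eq_one,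
        real_inner_comm, mul_one, norm_eq_abs, sq_abs]
      ring
    have hderiv : deriv q = fun s => 2 * ⟪b i, y - p⟫ + 2 * s := by
      funext s
      simpa using ((((hasDerivAt_id' s).const_mul (2 * ⟪b i, y - p⟫)).const_add
        (‖y - p‖ ^ 2)).fun_add (hasDerivAt_pow 2 s)).deriv
    have hcomp := iteratedDeriv_comp_two (g := φ) (f := q) (x := 0) (by simpa [hq] using hφ)
      (by fun_prop)
    have hderiv_two : iteratedDeriv 2 q 0 = 2 := by
      simp [iteratedDeriv_succ, hderiv]
    rw [hderiv_two, hderiv, show q 0 = ‖y - p‖ ^ 2 by simp [hq]] at hcomp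
    simpa [hline, Function.comp_def] using hcomp
  rw [laplacian_eq_sum_iteratedDeriv_two_line b hdiff]
  simp only [hsecond, Finset.sum_add_distrib, mul_pow, ← Finset.mul_sum, b.sum_sq_inner_right]
  simp
  ring

theorem laplacian_norm_sub_sq (p y : E) : Δ (fun x => ‖x - p‖ ^ 2) y = 2 * finrank ℝ E := by
  simpa [iteratedDeriv_succ] using
    laplacian_comp_norm_sub_sq (φ := id) (p := p) (y := y) contDiffAt_id

theorem iteratedDeriv_two_rpow_const (α t : ℝ) :
    iteratedDeriv 2 (fun t : ℝ => t ^ α) t = α * (α - 1) * t ^ (α - 1 - 1) := by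
  have hfirst : deriv (fun t : ℝ => t ^ α) = fun t => α * t ^ (α - 1) :=
    funext fun t => Real.deriv_rpow_const t α
  rw [iteratedDeriv_succ, iteratedDeriv_one, hfirst, deriv_const_mul_field,
    Real.deriv_rpow_const, mul_assoc]

theorem inv_pow_eq_sq_rpow {r : ℝ} (hr : 0 ≤ r) (k : ℕ) :
    (r ^ k)⁻¹ = (r ^ 2) ^ (-(k / 2) : ℝ) := by
  rw [← rpow_natCast_mul hr, ← rpow_natCast, ← rpow_neg hr]
  congr 1
  push_cast
  ring

theorem harmonicAt_inv_norm_sub_pow {k : ℕ} (hk : finrank ℝ E = k + 2) {p y : E} (hy : y ≠ p) :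
    HarmonicAt (fun x => (‖x - p‖ ^ k)⁻¹) y := by
  simp only [inv_pow_eq_sq_rpow (norm_nonneg _)]
  have hpos {x : E} (hx : x ≠ p) : 0 < ‖x - p‖ ^ 2 := by
    have := norm_pos_iff.2 (sub_ne_zero.2 hx)
    positivity
  have hsmooth {t : ℝ} (ht : 0 < t) : ContDiffAt ℝ 2 (fun t : ℝ => t ^ (-(k / 2) : ℝ)) t :=
    contDiffAt_id.rpow_const_of_ne ht.ne'
  refine ⟨ContDiffAt.comp (f := fun x => ‖x - p‖ ^ 2) y (hsmooth (hpos hy))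
    (contDiff_norm_sub_sq p).contDiffAt, ?_⟩
  filter_upwards [eventually_ne_nhds hy] with x hx
  rw [laplacian_comp_norm_sub_sq (hsmooth (hpos hx))]
  have hne := (hpos hx).ne'
  rw [iteratedDeriv_two_rpow_const, Real.deriv_rpow_const, rpow_sub_one hne (-(k / 2) - 1 : ℝ), hk,
    mul_assoc 4, mul_assoc (-(k / 2) * (-(k / 2) - 1) : ℝ), div_mul_cancel₀ _ hne]
  push_cast
  simp only [Pi.zero_apply]
  ring

end MaximumPrinciple

section HarnackInequality

theorem hasDerivAt_setIntegral_of_isCompact {Y : Type*} [TopologicalSpace Y] [MeasurableSpace Y]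
    [BorelSpace Y] [T2Space Y] [SecondCountableTopology Y] {μ : Measure Y}
    [IsFiniteMeasureOnCompacts μ] {K : Set Y} (hK : IsCompact K) {F F' : ℝ → Y → ℝ}
    (hF : Continuous (Function.uncurry F)) (hF' : Continuous (Function.uncurry F'))
    (hderiv : ∀ s y, HasDerivAt (F · y) (F' s y) s) (s₀ : ℝ) :
    HasDerivAt (fun s => ∫ y in K, F s y ∂μ) (∫ y in K, F' s₀ y ∂μ) s₀ := by
  obtain ⟨C, hC⟩ := ((isCompact_closedBall s₀ 1).prod hK).exists_bound_of_continuousOn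
    hF'.continuousOn
  have hFs (s : ℝ) : Continuous (F s) := hF.comp (by fun_prop : Continuous fun y => (s, y))
  have hFs' (s : ℝ) : Continuous (F' s) := hF'.comp (by fun_prop : Continuous fun y => (s, y))
  refine (hasDerivAt_integral_of_dominated_loc_of_deriv_le (s := closedBall s₀ 1)
    (bound := fun _ => C) (closedBall_mem_nhds s₀ one_pos)
    (Eventually.of_forall fun s => (hFs s).aestronglyMeasurable)
    ((hFs s₀).continuousOn.integrableOn_compact hK) (hFs' s₀).aestronglyMeasurable ?_
    (continuousOn_const.integrableOn_compact hK)
    (Eventually.of_forall fun y s _ => hderiv s y)).2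
  exact (ae_restrict_iff' hK.measurableSet).2
    (Eventually.of_forall fun y hy s hs => hC (s, y) ⟨hs, hy⟩)

theorem hasDerivAt_max_zero_sq (t : ℝ) :
    HasDerivAt (fun t : ℝ => max t 0 ^ 2) (2 * max t 0) t := by
  rcases lt_trichotomy t 0 with h | rfl | h
  · rw [max_eq_right h.le]
    refine (hasDerivAt_const t (0 : ℝ)).congr_of_eventuallyEq ?_ |>.congr_deriv (by simp)
    filter_upwards [Iio_mem_nhds h] with s hs
    simp [le_of_lt (Set.mem_Iio.1 hs)]
  · rw [hasDerivAt_iff_isLittleO_nhds_zero]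
    refine Asymptotics.IsBigO.trans_isLittleO (Asymptotics.isBigO_of_le _ fun x => ?_)
      (Asymptotics.isLittleO_pow_id (𝕜 := ℝ) one_lt_two)
    rcases le_total x 0 with hx | hx <;> simp [hx, sq_nonneg]
  · rw [max_eq_left h.le]
    refine (hasDerivAt_pow 2 t).congr_of_eventuallyEq ?_ |>.congr_deriv (by simp)
    filter_upwards [Ioi_mem_nhds h] with s hs
    rw [max_eq_left (le_of_lt (Set.mem_Ioi.1 hs))]

theorem add_smul_mem_closedBall {E : Type*} [NormedAddCommGroup E] [NormedSpace ℝ E] (x : E)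
    {y : E} (hy : y ∈ closedBall 0 1) {r : ℝ} (hr : 0 ≤ r) : x + r • y ∈ closedBall x r := by
  rw [mem_closedBall_zero_iff] at hy
  simpa [norm_smul, abs_of_nonneg hr] using mul_le_of_le_one_right hr hy

/-- The kernel `η(y) = max (1 - ‖y‖²) 0`, the weight of the local averages from which the Harnack
inequality is deduced. It is chosen so that `∇(η²) = -4 η y`: integrating by parts then turns the
radial derivative of an average against `η` into an integral of the Laplacian against `η²`. -/
def paraboloidKernel {E : Type*} [NormedAddCommGroup E] (y : E) : ℝ := max (1 - ‖y‖ ^ 2) 0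

theorem paraboloidKernel_nonneg {E : Type*} [NormedAddCommGroup E] (y : E) :
    0 ≤ paraboloidKernel y := le_max_right _ _

theorem paraboloidKernel_le_one {E : Type*} [NormedAddCommGroup E] (y : E) :
    paraboloidKernel y ≤ 1 :=
  max_le (by linarith [sq_nonneg ‖y‖]) zero_le_one

theorem paraboloidKernel_eq_zero {E : Type*} [NormedAddCommGroup E] {y : E}
    (hy : y ∉ closedBall 0 1) : paraboloidKernel y = 0 := by
  rw [mem_closedBall_zero_iff, not_le] at hy
  exact max_eq_right (by nlinarith)

theorem continuous_paraboloidKernel {E : Type*} [NormedAddCommGroup E] :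
    Continuous (paraboloidKernel (E := E)) := by
  unfold paraboloidKernel
  fun_prop

theorem paraboloidKernel_smul_add_le {E : Type*} [NormedAddCommGroup E] [NormedSpace ℝ E]
    (y : E) {c : E} {δ : ℝ} (hδ : 0 ≤ δ) (hc : ‖c‖ ≤ δ) :
    paraboloidKernel ((1 + δ) • y + c) ≤ (1 + δ) * paraboloidKernel y := by
  refine max_le ?_ (mul_nonneg (by linarith) (paraboloidKernel_nonneg y))
  refine le_trans ?_ (mul_le_mul_of_nonneg_left (le_max_left _ _) (by linarith))
  set z := (1 + δ) • y + c with hz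
  have hnorm : (1 + δ) * ‖y‖ ≤ ‖z‖ + δ := by
    calc (1 + δ) * ‖y‖ = ‖z - c‖ := by
          rw [hz, add_sub_cancel_right, norm_smul, norm_of_nonneg (by linarith)]
      _ ≤ ‖z‖ + δ := (norm_sub_le _ _).trans (by gcongr)
  have hsq : (1 + δ) * ((1 + δ) * ‖y‖ ^ 2) ≤ (1 + δ) * (‖z‖ ^ 2 + δ) := by
    calc (1 + δ) * ((1 + δ) * ‖y‖ ^ 2) = ((1 + δ) * ‖y‖) ^ 2 := by ring
      _ ≤ (‖z‖ + δ) ^ 2 := by gcongr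
      _ ≤ (1 + δ) * (‖z‖ ^ 2 + δ) := by nlinarith [mul_nonneg hδ (sq_nonneg (‖z‖ - 1))]
  linarith [le_of_mul_le_mul_left hsq (by linarith)]

variable {E : Type*} [NormedAddCommGroup E] [InnerProductSpace ℝ E]

theorem hasFDerivAt_paraboloidKernel_sq (y : E) :
    HasFDerivAt (fun y => paraboloidKernel y ^ 2)
      ((-(4 * paraboloidKernel y)) • innerSL ℝ y) y := by
  have hinner : HasFDerivAt (fun y : E => 1 - ‖y‖ ^ 2) (-(2 • innerSL ℝ y)) y :=
    (hasStrictFDerivAt_norm_sq y).hasFDerivAt.const_sub 1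
  refine ((hasDerivAt_max_zero_sq (1 - ‖y‖ ^ 2)).comp_hasFDerivAt y hinner).congr_fderiv ?_
  ext v
  simp [paraboloidKernel]
  ring

variable [FiniteDimensional ℝ E]

theorem hasCompactSupport_paraboloidKernel : HasCompactSupport (paraboloidKernel (E := E)) :=
  HasCompactSupport.intro (isCompact_closedBall 0 1) fun _ => paraboloidKernel_eq_zero

theorem continuous_laplacian {f : E → ℝ} (hf : ContDiff ℝ 2 f) : Continuous (Δ f) := by
  rw [laplacian_eq_iteratedFDeriv_stdOrthonormalBasis]
  exact continuous_finsetSum _ fun i _ => (hf.continuous_iteratedFDeriv le_rfl).eval_const _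

section Measure

variable [MeasurableSpace E] [BorelSpace E]

theorem integrable_mul_paraboloidKernel {g : E → ℝ} (hg : Continuous g) :
    Integrable fun y => g y * paraboloidKernel y :=
  (hg.mul continuous_paraboloidKernel).integrable_of_hasCompactSupport
    hasCompactSupport_paraboloidKernel.mul_left

theorem integrable_mul_paraboloidKernel_sq {g : E → ℝ} (hg : Continuous g) :
    Integrable fun y => g y * paraboloidKernel y ^ 2 := by
  simpa only [sq, mul_assoc] using
    integrable_mul_paraboloidKernel (hg.fun_mul continuous_paraboloidKernel)

theorem integral_paraboloidKernel_pos : 0 < ∫ y : E, paraboloidKernel y :=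
  continuous_paraboloidKernel.integral_pos_of_hasCompactSupport_nonneg_nonzero
    hasCompactSupport_paraboloidKernel paraboloidKernel_nonneg (x := 0) (by simp [paraboloidKernel])

theorem integral_mul_paraboloidKernel_sq_le {a b : E → ℝ} (ha : Continuous a) (hb : Continuous b)
    (hab : ∀ y ∈ closedBall 0 1, a y ≤ b y) (hb₀ : ∀ y ∈ closedBall 0 1, 0 ≤ b y) :
    ∫ y, a y * paraboloidKernel y ^ 2 ≤ ∫ y, b y * paraboloidKernel y := by
  refine integral_mono (integrable_mul_paraboloidKernel_sq ha)
    (integrable_mul_paraboloidKernel hb) fun y => ?_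
  by_cases hy : y ∈ closedBall 0 1
  · have hη := paraboloidKernel_nonneg y
    calc a y * paraboloidKernel y ^ 2 ≤ b y * paraboloidKernel y ^ 2 := by
          gcongr
          exact hab y hy
      _ ≤ b y * paraboloidKernel y := by
          refine mul_le_mul_of_nonneg_left ?_ (hb₀ y hy)
          nlinarith [paraboloidKernel_le_one y]
  · simp [paraboloidKernel_eq_zero hy]

theorem integral_comp_mul_inner_mul_paraboloidKernel {f : E → ℝ} (hf : ContDiff ℝ 1 f) (x : E)
    (r : ℝ) (e : E) :
    ∫ y, f (x + r • y) * (⟪e, y⟫ * paraboloidKernel y)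
      = r / 4 * ∫ y, fderiv ℝ f (x + r • y) e * paraboloidKernel y ^ 2 := by
  have hfc := hf.continuous
  have hf'c : Continuous fun y => fderiv ℝ f (x + r • y) e :=
    ((hf.continuous_fderiv one_ne_zero).comp (by fun_prop)).clm_apply continuous_const
  have hkernel (y : E) :
      fderiv ℝ (fun y => paraboloidKernel y ^ 2) y e = -4 * (⟪e, y⟫ * paraboloidKernel y) := by
    rw [(hasFDerivAt_paraboloidKernel_sq y).fderiv]
    simp [real_inner_comm]
    ring
  have hcomp (y : E) : HasFDerivAt (fun y => f (x + r • y)) (r • fderiv ℝ f (x + r • y)) y := by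
    have hscale : HasFDerivAt (fun y : E => x + r • y) (r • ContinuousLinearMap.id ℝ E) y :=
      ((hasFDerivAt_id y).const_smul r).const_add x
    refine ((hf.differentiable one_ne_zero (x + r • y)).hasFDerivAt.comp y hscale).congr_fderiv ?_
    ext v
    simp
  have hcomp' (y : E) : fderiv ℝ (fun y => f (x + r • y)) y e = r * fderiv ℝ f (x + r • y) e := by
    simp [(hcomp y).fderiv]
  have hparts := integral_mul_fderiv_eq_neg_fderiv_mul_of_integrable (μ := volume)
    (f := fun y => f (x + r • y)) (g := fun y : E => paraboloidKernel y ^ 2) (v := e)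
    ?_ ?_ ?_ (fun y _ => (hcomp y).differentiableAt)
    (fun y _ => (hasFDerivAt_paraboloidKernel_sq y).differentiableAt)
  · simp only [hkernel, hcomp', mul_left_comm _ (-4 : ℝ), mul_assoc r, integral_const_mul] at hparts
    linarith
  · simpa only [hcomp'] using integrable_mul_paraboloidKernel_sq (hf'c.const_mul r)
  · simp only [hkernel]
    simpa only [mul_assoc] using integrable_mul_paraboloidKernel (E := E)
      (g := fun y => f (x + r • y) * (-4) * ⟪e, y⟫) (by fun_prop)
  · exact integrable_mul_paraboloidKernel_sq (by fun_prop)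

/-- The local average of `v` over `closedBall x r` weighted by `paraboloidKernel`; it is not
normalised, so it equals `v x * ∫ η` at `r = 0`. -/
def kernelAverage (v : E → ℝ) (x : E) (r : ℝ) : ℝ := ∫ y, v (x + r • y) * paraboloidKernel y

theorem kernelAverage_zero (v : E → ℝ) (x : E) :
    kernelAverage v x 0 = (∫ y : E, paraboloidKernel y) * v x := by
  simp [kernelAverage, integral_const_mul, mul_comm]

theorem integral_fderiv_self_mul_paraboloidKernel {v : E → ℝ} (hv : ContDiff ℝ 2 v) (x : E)
    (r : ℝ) :
    ∫ y, fderiv ℝ v (x + r • y) y * paraboloidKernel y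
      = r / 4 * ∫ y, Δ v (x + r • y) * paraboloidKernel y ^ 2 := by
  have hv' : ContDiff ℝ 1 (fderiv ℝ v) := hv.fderiv_right (by norm_num)
  have hv'c := hv'.continuous
  set b := stdOrthonormalBasis ℝ E
  have hexpand (L : E →L[ℝ] ℝ) (y : E) : L y = ∑ i, L (b i) * ⟪b i, y⟫ := by
    conv_lhs => rw [← b.sum_repr' y]
    simp [mul_comm]
  have hsecond (i) (z : E) : fderiv ℝ (fun z => fderiv ℝ v z (b i)) z (b i)
      = iteratedFDeriv ℝ 2 v z ![b i, b i] := by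
    simp [iteratedFDeriv_two_apply,
      fderiv_clm_apply (hv'.differentiable one_ne_zero z) (differentiableAt_const _)]
  calc ∫ y, fderiv ℝ v (x + r • y) y * paraboloidKernel y
      = ∫ y, ∑ i, fderiv ℝ v (x + r • y) (b i) * (⟪b i, y⟫ * paraboloidKernel y) := by
        congr! 2 with y
        rw [hexpand, Finset.sum_mul]
        simp only [mul_assoc]
    _ = ∑ i, r / 4 * ∫ y, fderiv ℝ (fun z => fderiv ℝ v z (b i)) (x + r • y) (b i)
          * paraboloidKernel y ^ 2 := by
        rw [integral_finsetSum _ fun i _ => ?_]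
        · exact Finset.sum_congr rfl fun i _ => integral_comp_mul_inner_mul_paraboloidKernel
            (hv'.clm_apply contDiff_const) x r (b i)
        · simpa only [mul_assoc] using integrable_mul_paraboloidKernel (E := E)
            (g := fun y => fderiv ℝ v (x + r • y) (b i) * ⟪b i, y⟫) (by fun_prop)
    _ = r / 4 * ∫ y, Δ v (x + r • y) * paraboloidKernel y ^ 2 := by
        simp only [hsecond, laplacian_eq_iteratedFDeriv_orthonormalBasis v b, Finset.sum_mul]
        rw [integral_finsetSum _ fun i _ => ?_, Finset.mul_sum]
        exact integrable_mul_paraboloidKernel_sq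
          (((hv.continuous_iteratedFDeriv le_rfl).eval_const _).comp (by fun_prop))

theorem hasDerivAt_kernelAverage {v : E → ℝ} (hv : ContDiff ℝ 2 v) (x : E) (r : ℝ) :
    HasDerivAt (kernelAverage v x)
      (r / 4 * ∫ y, Δ v (x + r • y) * paraboloidKernel y ^ 2) r := by
  have hvc := hv.continuous
  have hη := continuous_paraboloidKernel (E := E)
  have hv'c := hv.continuous_fderiv two_ne_zero
  have hball (g : E → ℝ) : ∫ y in closedBall 0 1, g y * paraboloidKernel y
      = ∫ y, g y * paraboloidKernel y :=
    setIntegral_eq_integral_of_forall_compl_eq_zero fun y hy => by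
      simp [paraboloidKernel_eq_zero hy]
  have hparam := hasDerivAt_setIntegral_of_isCompact (μ := (volume : Measure E))
    (isCompact_closedBall (0 : E) 1) (F := fun r y => v (x + r • y) * paraboloidKernel y)
    (F' := fun r y => fderiv ℝ v (x + r • y) y * paraboloidKernel y)
    (by simp only [Function.uncurry_def]; fun_prop)
    (by simp only [Function.uncurry_def]; fun_prop)
    (fun s y => by
      have hline : HasDerivAt (fun s : ℝ => x + s • y) y s := by
        simpa using ((hasDerivAt_id s).smul_const y).const_add x
      exact ((hv.differentiable two_ne_zero _).hasFDerivAt.comp_hasDerivAt s hline).mul_const _) r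
  simp only [hball, integral_fderiv_self_mul_paraboloidKernel hv] at hparam
  exact hparam

theorem kernelAverage_le {v : E → ℝ} (hv : ContDiff ℝ 2 v) {p : E} {W K : ℝ} (hW : 0 ≤ W)
    (hK : 0 ≤ K) (hΔ : ∀ y ∈ closedBall p W, Δ v y ≤ K) :
    kernelAverage v p W ≤ (∫ y : E, paraboloidKernel y) * (v p + K * W ^ 2 / 8) := by
  set Z := ∫ y : E, paraboloidKernel y with hZ
  have hderiv (r : ℝ) : HasDerivAt (fun r => kernelAverage v p r - Z * (K * r ^ 2 / 8))
      (r / 4 * (∫ y, Δ v (p + r • y) * paraboloidKernel y ^ 2) - Z * (K * r / 4)) r := by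
    refine ((hasDerivAt_kernelAverage hv p r).fun_sub
      ((((hasDerivAt_pow 2 r).const_mul K).div_const 8).const_mul Z)).congr_deriv ?_
    push_cast
    ring
  have hanti : AntitoneOn (fun r => kernelAverage v p r - Z * (K * r ^ 2 / 8)) (Set.Icc 0 W) := by
    refine antitoneOn_of_deriv_nonpos (convex_Icc 0 W)
      (fun r _ => (hderiv r).continuousAt.continuousWithinAt)
      (fun r _ => (hderiv r).differentiableAt.differentiableWithinAt) fun r hr => ?_
    rw [interior_Icc] at hr
    rw [(hderiv r).deriv]
    have hintegral : ∫ y, Δ v (p + r • y) * paraboloidKernel y ^ 2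
        ≤ ∫ y : E, K * paraboloidKernel y :=
      integral_mul_paraboloidKernel_sq_le ((continuous_laplacian hv).comp (by fun_prop))
        continuous_const
        (fun y hy => hΔ _ (closedBall_subset_closedBall hr.2.le
          (add_smul_mem_closedBall p hy hr.1.le))) fun _ _ => hK
    rw [integral_const_mul, ← hZ] at hintegral
    linarith [mul_le_mul_of_nonneg_left hintegral hr.1.le]
  have h := hanti (Set.left_mem_Icc.2 hW) (Set.right_mem_Icc.2 hW) hW
  simp only [kernelAverage_zero, ← hZ] at h
  linarith

theorem mul_le_exp_mul_kernelAverage {v : E → ℝ} (hv : ContDiff ℝ 2 v) {x : E} {w lam : ℝ}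
    (hw : 0 ≤ w) (hlam : 0 ≤ lam) (hv₀ : ∀ y ∈ closedBall x w, 0 ≤ v y)
    (hΔ : ∀ y ∈ closedBall x w, -lam * v y ≤ Δ v y) :
    (∫ y : E, paraboloidKernel y) * v x ≤ exp (lam * w ^ 2 / 8) * kernelAverage v x w := by
  have hderiv (r : ℝ) : HasDerivAt (fun r => exp (lam * r ^ 2 / 8) * kernelAverage v x r)
      (exp (lam * r ^ 2 / 8) * (r / 4 * (lam * kernelAverage v x r
        + ∫ y, Δ v (x + r • y) * paraboloidKernel y ^ 2))) r := by
    refine ((((hasDerivAt_pow 2 r).const_mul lam).div_const 8).exp.mul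
      (hasDerivAt_kernelAverage hv x r)).congr_deriv ?_
    push_cast
    ring
  have hmono : MonotoneOn (fun r => exp (lam * r ^ 2 / 8) * kernelAverage v x r)
      (Set.Icc 0 w) := by
    refine monotoneOn_of_deriv_nonneg (convex_Icc 0 w)
      (fun r _ => (hderiv r).continuousAt.continuousWithinAt)
      (fun r _ => (hderiv r).differentiableAt.differentiableWithinAt) fun r hr => ?_
    rw [interior_Icc] at hr
    rw [(hderiv r).deriv]
    have hmem {y : E} (hy : y ∈ closedBall 0 1) : x + r • y ∈ closedBall x w :=
      closedBall_subset_closedBall hr.2.le (add_smul_mem_closedBall x hy hr.1.le)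
    have hintegral := integral_mul_paraboloidKernel_sq_le (E := E)
      (a := fun y => -Δ v (x + r • y)) (b := fun y => lam * v (x + r • y))
      ((continuous_laplacian hv).comp (by fun_prop)).neg
      ((hv.continuous.comp (by fun_prop)).const_mul lam)
      (fun y hy => by linarith [hΔ _ (hmem hy)]) fun y hy => mul_nonneg hlam (hv₀ _ (hmem hy))
    simp only [neg_mul, integral_neg, mul_assoc, integral_const_mul] at hintegral
    have hr₀ := hr.1.le
    have : 0 ≤ lam * kernelAverage v x r + ∫ y, Δ v (x + r • y) * paraboloidKernel y ^ 2 := by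
      simp only [kernelAverage]
      linarith
    positivity
  simpa [kernelAverage_zero] using hmono (Set.left_mem_Icc.2 hw) (Set.right_mem_Icc.2 hw) hw

theorem kernelAverage_le_of_dist {v : E → ℝ} (hv : Continuous v) {x p : E} {w δ : ℝ} (hw : 0 < w)
    (hδ : 0 ≤ δ) (hdist : dist x p ≤ δ * w)
    (hv₀ : ∀ y ∈ closedBall p ((1 + δ) * w), 0 ≤ v y) :
    kernelAverage v x w
      ≤ (1 + δ) ^ (finrank ℝ E + 1) * kernelAverage v p ((1 + δ) * w) := by
  set c : E := w⁻¹ • (p - x) with hc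
  have hcδ : ‖c‖ ≤ δ := by
    rw [hc, norm_smul, norm_inv, norm_of_nonneg hw.le, ← dist_eq_norm, dist_comm,
      inv_mul_le_iff₀ hw, mul_comm]
    exact hdist
  have hpoint (y : E) : x + w • ((1 + δ) • y + c) = p + ((1 + δ) * w) • y := by
    rw [hc, smul_add, smul_smul, smul_smul, mul_inv_cancel₀ hw.ne', one_smul, mul_comm w]
    abel
  set g : E → ℝ := fun y => v (x + w • y) * paraboloidKernel y with hg
  have hchange : kernelAverage v x w
      = (1 + δ) ^ finrank ℝ E * ∫ y, g ((1 + δ) • y + c) := by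
    rw [Measure.integral_comp_smul volume (fun y => g (y + c)) (1 + δ),
      integral_add_right_eq_self g c, smul_eq_mul, ← mul_assoc,
      abs_of_pos (by positivity), mul_inv_cancel₀ (by positivity), one_mul, kernelAverage]
  have hcomp : ∫ y, g ((1 + δ) • y + c)
      ≤ ∫ y, (1 + δ) * (v (p + ((1 + δ) * w) • y) * paraboloidKernel y) := by
    refine integral_mono
      (((integrable_mul_paraboloidKernel (g := fun y => v (x + w • y)) (by fun_prop)).comp_add_right
        c).comp_smul (by linarith))
      ((integrable_mul_paraboloidKernel (by fun_prop)).const_mul _) fun y => ?_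
    simp only [hg, hpoint, mul_left_comm (1 + δ)]
    have hshift := paraboloidKernel_smul_add_le y hδ hcδ
    by_cases hy : y ∈ closedBall 0 1
    · exact mul_le_mul_of_nonneg_left hshift
        (hv₀ _ (add_smul_mem_closedBall p hy (by positivity)))
    · rw [paraboloidKernel_eq_zero hy, mul_zero] at hshift ⊢
      simp [le_antisymm hshift (paraboloidKernel_nonneg _)]
  rw [integral_const_mul] at hcomp
  calc kernelAverage v x w = (1 + δ) ^ finrank ℝ E * ∫ y, g ((1 + δ) • y + c) := hchange
    _ ≤ (1 + δ) ^ finrank ℝ E * ((1 + δ) * kernelAverage v p ((1 + δ) * w)) := by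
        gcongr
        exact hcomp
    _ = _ := by ring

end Measure

theorem le_mul_of_laplacian_bounds {v : E → ℝ} (hv : ContDiff ℝ 2 v) {x p : E} {w δ lam K : ℝ}
    (hw : 0 < w) (hδ : 0 ≤ δ) (hlam : 0 ≤ lam) (hK : 0 ≤ K) (hdist : dist x p ≤ δ * w)
    (hv₀ : ∀ y ∈ closedBall p ((1 + δ) * w), 0 ≤ v y)
    (hΔge : ∀ y ∈ closedBall p ((1 + δ) * w), -lam * v y ≤ Δ v y)
    (hΔle : ∀ y ∈ closedBall p ((1 + δ) * w), Δ v y ≤ K) :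
    v x ≤ (1 + δ) ^ (finrank ℝ E + 1)
      * (exp (lam * w ^ 2 / 8) * (v p + K * ((1 + δ) * w) ^ 2 / 8)) := by
  borelize E
  have hsub : closedBall x w ⊆ closedBall p ((1 + δ) * w) :=
    closedBall_subset_closedBall' (by linarith)
  refine le_of_mul_le_mul_left ?_ (integral_paraboloidKernel_pos (E := E))
  calc (∫ y : E, paraboloidKernel y) * v x
      ≤ exp (lam * w ^ 2 / 8) * kernelAverage v x w :=
        mul_le_exp_mul_kernelAverage hv hw.le hlam (fun y hy => hv₀ y (hsub hy))
          fun y hy => hΔge y (hsub hy)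
    _ ≤ exp (lam * w ^ 2 / 8) * ((1 + δ) ^ (finrank ℝ E + 1)
          * ((∫ y : E, paraboloidKernel y) * (v p + K * ((1 + δ) * w) ^ 2 / 8))) := by
        gcongr
        refine (kernelAverage_le_of_dist hv.continuous hw hδ hdist hv₀).trans ?_
        gcongr
        exact kernelAverage_le hv (by positivity) hK hΔle
    _ = _ := by ring

end HarnackInequality

section Eigenfunction

variable {E : Type*} [NormedAddCommGroup E] [InnerProductSpace ℝ E] [FiniteDimensional ℝ E]

/-- A twice continuously differentiable solution of `Δψ = -λψ`, the regularity all estimates on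
eigenfunctions below need; `ψ = 0` is allowed. -/
structure IsEigenfunction (ψ : E → ℝ) (lam : ℝ) : Prop where
  contDiff : ContDiff ℝ 2 ψ
  laplacian_eq : ∀ x, Δ ψ x = -lam * ψ x

theorem IsEigenfunction.continuous {ψ : E → ℝ} {lam : ℝ} (hψ : IsEigenfunction ψ lam) :
    Continuous ψ := hψ.contDiff.continuous

theorem IsEigenfunction.neg {ψ : E → ℝ} {lam : ℝ} (hψ : IsEigenfunction ψ lam) :
    IsEigenfunction (-ψ) lam where
  contDiff := hψ.contDiff.neg
  laplacian_eq x := by simp [laplacian_neg, hψ.laplacian_eq]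

theorem IsEigenfunction.add_le_of_neg_le {ψ : E → ℝ} {lam : ℝ} (hψ : IsEigenfunction ψ lam)
    (hlam : 0 ≤ lam) {A : ℝ} (hA : 0 ≤ A) {x p : E} {w δ : ℝ} (hw : 0 < w) (hδ : 0 ≤ δ)
    (hdist : dist x p ≤ δ * w) (hge : ∀ y ∈ closedBall p ((1 + δ) * w), -A ≤ ψ y) :
    ψ x + A ≤ (1 + δ) ^ (finrank ℝ E + 1)
      * (exp (lam * w ^ 2 / 8) * (ψ p + A + lam * A * ((1 + δ) * w) ^ 2 / 8)) := by
  have hΔ (y : E) : Δ (fun z => ψ z + A) y = -lam * ψ y := by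
    rw [← hψ.laplacian_eq]
    exact (hψ.contDiff.contDiffAt.laplacian_add contDiffAt_const).trans (by simp)
  exact le_mul_of_laplacian_bounds (v := fun z => ψ z + A) (hψ.contDiff.add contDiff_const)
    hw hδ hlam (mul_nonneg hlam hA) hdist (fun y hy => by linarith [hge y hy])
    (fun y _ => by rw [hΔ]; nlinarith)
    fun y hy => by rw [hΔ]; nlinarith [hge y hy]

end Eigenfunction

section RemezInequality

theorem prod_erase_abs_sub_eq_factorial_mul {N j : ℕ} (hj : j ≤ N) :
    ∏ i ∈ (Finset.range (N + 1)).erase j, |(j : ℝ) - i| = j.factorial * (N - j).factorial := by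
  have hsplit : (Finset.range (N + 1)).erase j
      = Finset.range j ∪ Finset.Ico (j + 1) (N + 1) := by
    ext i
    simp only [Finset.mem_erase, Finset.mem_range, Finset.mem_union, Finset.mem_Ico]
    omega
  have hdisj : Disjoint (Finset.range j) (Finset.Ico (j + 1) (N + 1)) := by
    rw [Finset.disjoint_left]
    intro i hi hi'
    rw [Finset.mem_range] at hi
    rw [Finset.mem_Ico] at hi'
    omega
  rw [hsplit, Finset.prod_union hdisj]
  congr 1
  · rw [← Finset.prod_range_add_one_eq_factorial, ← Finset.prod_range_reflect, Nat.cast_prod]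
    refine Finset.prod_congr rfl fun i hi => ?_
    rw [Finset.mem_range] at hi
    rw [Nat.sub_sub, add_comm 1, Nat.cast_sub hi, sub_sub_cancel, Nat.abs_cast]
  · rw [← Finset.prod_range_add_one_eq_factorial, Finset.prod_Ico_eq_prod_range, Nat.cast_prod,
      Nat.succ_sub_succ]
    refine Finset.prod_congr rfl fun i _ => ?_
    rw [abs_sub_comm, add_right_comm, add_assoc, Nat.cast_add, add_sub_cancel_left, Nat.abs_cast]

section Lagrange

variable {𝕜 : Type*} [NormedField 𝕜] {N : ℕ} {v : ℕ → 𝕜} {m B : ℝ}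

theorem norm_eval_lagrange_basis_le (hm : 0 < m)
    (hv : ∀ i ≤ N, ∀ j ≤ N, m * |(i : ℝ) - j| ≤ ‖v i - v j‖) {x : 𝕜}
    (hx : ∀ i ≤ N, ‖x - v i‖ ≤ B) {j : ℕ} (hj : j ≤ N) :
    ‖(Lagrange.basis (Finset.range (N + 1)) v j).eval x‖
      ≤ (B / m) ^ N / (j.factorial * (N - j).factorial) := by
  have hcard : ((Finset.range (N + 1)).erase j).card = N := by
    rw [Finset.card_erase_of_mem (Finset.mem_range_succ_iff.2 hj), Finset.card_range,
      Nat.succ_sub_one]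
  have hpow : (B / m) ^ N = ∏ _i ∈ (Finset.range (N + 1)).erase j, B / m := by
    rw [Finset.prod_const, hcard]
  rw [Lagrange.basis, Polynomial.eval_prod, norm_prod, ← prod_erase_abs_sub_eq_factorial_mul hj,
    hpow, ← Finset.prod_div_distrib]
  refine Finset.prod_le_prod (fun i _ => norm_nonneg _) fun i hi => ?_
  obtain ⟨hij, hi⟩ := Finset.mem_erase.1 hi
  rw [Finset.mem_range_succ_iff] at hi
  have hpos : 0 < m * |(j : ℝ) - i| := by
    have : (j : ℝ) - i ≠ 0 := sub_ne_zero.2 (Nat.cast_injective.ne hij.symm)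
    positivity
  simp only [Lagrange.basisDivisor, Polynomial.eval_mul, Polynomial.eval_C, Polynomial.eval_sub,
    Polynomial.eval_X, norm_mul, norm_inv]
  calc ‖v j - v i‖⁻¹ * ‖x - v i‖ ≤ (m * |(j : ℝ) - i|)⁻¹ * B := by
        gcongr
        · exact hv j hj i hi
        · exact hx i hi
    _ = B / m / |(j : ℝ) - i| := by field_simp

theorem sum_pow_div_factorial_mul_factorial (q : ℝ) :
    ∑ j ∈ Finset.range (N + 1), q ^ N / (j.factorial * (N - j).factorial)
      = (2 * q) ^ N / N.factorial := by
  have hchoose : ∀ j ∈ Finset.range (N + 1), q ^ N / ((j.factorial : ℝ) * (N - j).factorial)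
      = q ^ N / N.factorial * N.choose j := fun j hj => by
    rw [Nat.cast_choose ℝ (Finset.mem_range_succ_iff.1 hj)]
    field_simp
  rw [Finset.sum_congr rfl hchoose, ← Finset.mul_sum, ← Nat.cast_sum, Nat.sum_range_choose]
  push_cast
  ring

theorem norm_eval_le_of_norm_eval_nodes_le (hm : 0 < m)
    (hv : ∀ i ≤ N, ∀ j ≤ N, m * |(i : ℝ) - j| ≤ ‖v i - v j‖) {P : Polynomial 𝕜}
    (hP : P.natDegree ≤ N) {M : ℝ} (hM : ∀ i ≤ N, ‖P.eval (v i)‖ ≤ M) {x : 𝕜}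
    (hx : ∀ i ≤ N, ‖x - v i‖ ≤ B) :
    ‖P.eval x‖ ≤ (2 * (B / m)) ^ N / N.factorial * M := by
  have hinj : Set.InjOn v (Finset.range (N + 1)) := by
    intro i hi j hj hij
    simp only [Finset.coe_range, Set.mem_Iio, Nat.lt_succ_iff] at hi hj
    have h := hv i hi j hj
    rw [hij, sub_self, norm_zero] at h
    have habs := nonpos_of_mul_nonpos_right h hm
    exact_mod_cast sub_eq_zero.1 (abs_nonpos_iff.1 habs)
  have hdeg : P.degree < (Finset.range (N + 1)).card := by
    rw [Finset.card_range]
    exact Polynomial.degree_le_natDegree.trans_lt (by exact_mod_cast Nat.lt_succ_of_le hP)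
  conv_lhs => rw [Lagrange.eq_interpolate hinj hdeg]
  rw [Lagrange.interpolate_apply, Polynomial.eval_finsetSum,
    ← sum_pow_div_factorial_mul_factorial, Finset.sum_mul]
  refine norm_sum_le_of_le _ fun j hj => ?_
  rw [Finset.mem_range_succ_iff] at hj
  rw [Polynomial.eval_mul, Polynomial.eval_C, norm_mul, mul_comm]
  exact mul_le_mul (norm_eval_lagrange_basis_le hm hv hx hj) (hM j hj) (norm_nonneg _)
    ((norm_nonneg _).trans (norm_eval_lagrange_basis_le hm hv hx hj))

end Lagrange

theorem norm_fourierChar_sub_fourierChar (s t : ℝ) :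
    ‖(𝐞 s : ℂ) - 𝐞 t‖ = 2 * |sin (π * (s - t))| := by
  have hfactor : (𝐞 s : ℂ) - 𝐞 t
      = 𝐞 t * (Complex.exp (Complex.I * (2 * π * (s - t) : ℝ)) - 1) := by
    rw [mul_sub, mul_one, fourierChar_apply, fourierChar_apply, ← Complex.exp_add]
    congr 2
    push_cast
    ring
  rw [hfactor, norm_mul, Circle.norm_coe, one_mul, Complex.norm_exp_I_mul_ofReal_sub_one, norm_mul,
    norm_eq_abs, norm_eq_abs, abs_two]
  congr 3
  ring

theorem norm_fourierChar_sub_fourierChar_le (s t : ℝ) :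
    ‖(𝐞 s : ℂ) - 𝐞 t‖ ≤ 2 * π * |s - t| := by
  rw [norm_fourierChar_sub_fourierChar, mul_assoc]
  gcongr
  exact abs_sin_le_abs.trans_eq (by rw [abs_mul, abs_of_pos pi_pos])

theorem mul_abs_sub_le_norm_fourierChar_sub_fourierChar {s t : ℝ} (h : |s - t| ≤ 1 / 2) :
    4 * |s - t| ≤ ‖(𝐞 s : ℂ) - 𝐞 t‖ := by
  have habs : |π * (s - t)| = π * |s - t| := by rw [abs_mul, abs_of_pos pi_pos]
  have hsin := mul_abs_le_abs_sin (x := π * (s - t))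
    (by rw [habs]; nlinarith [pi_pos])
  rw [norm_fourierChar_sub_fourierChar]
  calc 4 * |s - t| = 2 * (2 / π * |π * (s - t)|) := by
        rw [habs]
        field_simp
        ring
    _ ≤ 2 * |sin (π * (s - t))| := by gcongr

theorem pi_mul_div_pow_div_factorial_le {N : ℕ} {T : ℝ} (hT : 0 ≤ T) :
    (2 * (π * (T + 1) * N / 4)) ^ N / N.factorial ≤ (5 * (T + 1)) ^ N := by
  have hexp : (N : ℝ) ^ N / N.factorial ≤ exp 1 ^ N := by
    rw [← exp_nat_mul, mul_one]
    exact pow_div_factorial_le_exp _ N.cast_nonneg N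
  calc (2 * (π * (T + 1) * N / 4)) ^ N / N.factorial
      = (π * (T + 1) / 2) ^ N * ((N : ℝ) ^ N / N.factorial) := by
        rw [show 2 * (π * (T + 1) * N / 4) = π * (T + 1) / 2 * N by ring, mul_pow, mul_div_assoc]
    _ ≤ (π * (T + 1) / 2) ^ N * exp 1 ^ N := by gcongr
    _ = (π * exp 1 / 2 * (T + 1)) ^ N := by rw [← mul_pow]; ring
    _ ≤ (5 * (T + 1)) ^ N := by
        gcongr
        nlinarith [pi_lt_d2, exp_one_lt_d9, exp_pos 1]

theorem norm_eval_fourierChar_le_of_arc {N : ℕ} (hN : 0 < N) {P : Polynomial ℂ}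
    (hP : P.natDegree ≤ N) {a h T M : ℝ} (hh : 0 < h) (hT : 1 ≤ T) (hTh : T * h ≤ 1 / 4)
    (hM : ∀ t ∈ closedBall a h, ‖P.eval (𝐞 t : ℂ)‖ ≤ M) {t : ℝ} (ht : t ∈ closedBall a (T * h)) :
    ‖P.eval (𝐞 t : ℂ)‖ ≤ (5 * (T + 1)) ^ N * M := by
  have hN' : (0 : ℝ) < N := Nat.cast_pos.2 hN
  have hM₀ : 0 ≤ M := (norm_nonneg _).trans (hM a (mem_closedBall_self hh.le))
  set u : ℕ → ℝ := fun j => a + h * (2 * j / N - 1) with hu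
  have hu_sub (i j : ℕ) : |u i - u j| = 2 * h / N * |(i : ℝ) - j| := by
    rw [← abs_of_pos (show 0 < 2 * h / N by positivity), ← abs_mul]
    congr 1
    simp only [hu]
    ring
  have hu_mem : ∀ i ≤ N, u i ∈ closedBall a h := fun i hi => by
    have hi' : 2 * (i : ℝ) / N ≤ 2 := by
      rw [div_le_iff₀ hN']
      gcongr
    have hi₀ : (0 : ℝ) ≤ 2 * i / N := by positivity
    rw [mem_closedBall, dist_eq, add_sub_cancel_left, abs_mul, abs_of_pos hh]
    exact mul_le_of_le_one_right hh.le (abs_le.2 ⟨by linarith, by linarith⟩)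
  have hnodes : ∀ i ≤ N, ∀ j ≤ N, 8 * h / N * |(i : ℝ) - j| ≤ ‖(𝐞 (u i) : ℂ) - 𝐞 (u j)‖ := by
    intro i hi j hj
    have hij : |u i - u j| ≤ 1 / 2 := (dist_triangle_right _ _ a).trans (by
      nlinarith [mem_closedBall.1 (hu_mem i hi), mem_closedBall.1 (hu_mem j hj)])
    calc 8 * h / N * |(i : ℝ) - j| = 4 * |u i - u j| := by rw [hu_sub]; ring
      _ ≤ _ := mul_abs_sub_le_norm_fourierChar_sub_fourierChar hij
  have hdist : ∀ i ≤ N, ‖(𝐞 t : ℂ) - 𝐞 (u i)‖ ≤ 2 * π * ((T + 1) * h) := fun i hi =>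
    (norm_fourierChar_sub_fourierChar_le _ _).trans (by
      gcongr
      refine (dist_triangle_right _ _ a).trans ?_
      linarith [mem_closedBall.1 ht, mem_closedBall.1 (hu_mem i hi)])
  refine (norm_eval_le_of_norm_eval_nodes_le (v := fun i => (𝐞 (u i) : ℂ)) (by positivity) hnodes hP
    (fun i hi => hM _ (hu_mem i hi)) hdist).trans ?_
  gcongr
  have hratio : 2 * π * ((T + 1) * h) / (8 * h / N) = π * (T + 1) * N / 4 := by
    field_simp
    ring
  rw [hratio]
  exact pi_mul_div_pow_div_factorial_le (by linarith)

end RemezInequality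

section TrigonometricPolynomials

theorem fourier_coe_eq_fourierChar_zpow (k : ℤ) (t : ℝ) :
    fourier k (t : UnitAddCircle) = (𝐞 t : ℂ) ^ k := by
  rw [fourier_coe_apply, fourierChar_apply, ← Complex.exp_int_mul]
  congr 1
  push_cast
  ring

theorem exists_polynomial_eval_eq_of_fourierCoeff_eq_zero {F : C(UnitAddCircle, ℂ)} {D : ℕ}
    (hF : ∀ k : ℤ, D < k.natAbs → fourierCoeff F k = 0) :
    ∃ P : Polynomial ℂ, P.natDegree ≤ 2 * D ∧
      ∀ t : ℝ, P.eval (𝐞 t : ℂ) = (𝐞 t : ℂ) ^ D * F t := by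
  have hzero : ∀ k ∉ Finset.Icc (-(D : ℤ)) D, fourierCoeff F k = 0 := fun k hk => hF k (by
    rw [Finset.mem_Icc] at hk
    omega)
  refine ⟨∑ k ∈ Finset.Icc (-(D : ℤ)) D,
    Polynomial.C (fourierCoeff F k) * Polynomial.X ^ (D + k).toNat, ?_, fun t => ?_⟩
  · refine Polynomial.natDegree_sum_le_of_forall_le _ _ fun k hk => ?_
    rw [Finset.mem_Icc] at hk
    exact (Polynomial.natDegree_C_mul_X_pow_le _ _).trans (by omega)
  · have hseries := (has_pointwise_sum_fourier_series_of_summable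
      (summable_of_ne_finset_zero hzero) (t : UnitAddCircle)).unique
      (hasSum_sum_of_ne_finset_zero fun k hk => by rw [hzero k hk, zero_smul])
    rw [hseries, Polynomial.eval_finsetSum, Finset.mul_sum]
    refine Finset.sum_congr rfl fun k hk => ?_
    rw [Finset.mem_Icc] at hk
    rw [Polynomial.eval_mul, Polynomial.eval_C, Polynomial.eval_pow, Polynomial.eval_X,
      fourier_coe_eq_fourierChar_zpow, smul_eq_mul, ← zpow_natCast, Int.toNat_of_nonneg (by omega),
      zpow_add₀ (Circle.coe_ne_zero _), zpow_natCast]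
    ring

theorem fourierCoeff_eq_zero_of_integral_mul_cos_eq_zero {f : ℝ → ℝ} (hf : Continuous f)
    {F : C(UnitAddCircle, ℂ)} (hF : ∀ t : ℝ, F (t : UnitAddCircle) = f t) {k : ℤ}
    (hvanish : ∀ φ : ℝ, ∫ t in (0 : ℝ)..1, f t * cos (2 * π * k * t + φ) = 0) :
    fourierCoeff F k = 0 := by
  have hintegrand (t : ℝ) : fourier (-k) (t : UnitAddCircle) • F (t : UnitAddCircle)
      = ((f t * cos (2 * π * k * t + 0) : ℝ) : ℂ)
        + ((f t * cos (2 * π * k * t + π / 2) : ℝ) : ℂ) * Complex.I := by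
    have hexp : 2 * (π : ℂ) * Complex.I * ((-k : ℤ) : ℂ) * t / ((1 : ℝ) : ℂ)
        = ((-(2 * π * k * t) : ℝ) : ℂ) * Complex.I := by
      push_cast
      ring
    rw [hF, fourier_coe_apply, add_zero, cos_add_pi_div_two, smul_eq_mul, hexp,
      Complex.exp_mul_I, ← Complex.ofReal_cos, ← Complex.ofReal_sin, cos_neg, sin_neg]
    push_cast
    ring
  rw [fourierCoeff_eq_intervalIntegral F k 0]
  simp only [hintegrand]
  rw [intervalIntegral.integral_add (Continuous.intervalIntegrable (by fun_prop) _ _)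
      (Continuous.intervalIntegrable (by fun_prop) _ _), intervalIntegral.integral_mul_const,
    intervalIntegral.integral_ofReal, intervalIntegral.integral_ofReal]
  simp only [zero_add, hvanish]
  simp

end TrigonometricPolynomials

section WeightedLineIntegral

section NormedSpace

variable {E : Type*} [NormedAddCommGroup E] [NormedSpace ℝ E] {ψ : E → ℝ} {q : ℝ → ℝ}

/-- The integral of `ψ` over the segment from `x` to `x + v` with weight `q`. For a `v`-periodic `ψ`
and `q t = cos (2πkt)` or `sin (2πkt)` it is a Fourier coefficient of `ψ` along the line
`x + ℝ v`. -/
def weightedLineIntegral (ψ : E → ℝ) (q : ℝ → ℝ) (v x : E) : ℝ :=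
  ∫ t in (0 : ℝ)..1, ψ (x + t • v) * q t

theorem continuous_weightedLineIntegral (hψ : Continuous ψ) (hq : Continuous q) (v : E) :
    Continuous (weightedLineIntegral ψ q v) := by
  refine intervalIntegral.continuous_parametric_intervalIntegral_of_continuous' ?_ 0 1
  simp only [Function.uncurry_def]
  fun_prop

theorem hasDerivAt_line (x v : E) (t : ℝ) : HasDerivAt (fun s : ℝ => x + s • v) v t := by
  simpa using ((hasDerivAt_id t).smul_const v).const_add x

theorem hasDerivAt_weightedLineIntegral_line (hψ : ContDiff ℝ 1 ψ) (hq : Continuous q)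
    (v x e : E) (s : ℝ) :
    HasDerivAt (fun s : ℝ => weightedLineIntegral ψ q v (x + s • e))
      (weightedLineIntegral (fun z => fderiv ℝ ψ z e) q v (x + s • e)) s := by
  have hψc := hψ.continuous
  simp only [weightedLineIntegral, intervalIntegral.integral_of_le zero_le_one,
    ← integral_Icc_eq_integral_Ioc]
  refine hasDerivAt_setIntegral_of_isCompact isCompact_Icc
    (F := fun s t => ψ (x + s • e + t • v) * q t)
    (F' := fun s t => fderiv ℝ ψ (x + s • e + t • v) e * q t)
    (by simp only [Function.uncurry_def]; fun_prop)
    (by simp only [Function.uncurry_def]; fun_prop) (fun s t => ?_) s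
  exact ((hψ.differentiable one_ne_zero _).hasFDerivAt.comp_hasDerivAt s
    ((hasDerivAt_line x e s).add_const _)).mul_const _

theorem contDiff_fderiv_apply (hψ : ContDiff ℝ 2 ψ) (e : E) :
    ContDiff ℝ 1 fun z => fderiv ℝ ψ z e :=
  (hψ.fderiv_right (by norm_num)).clm_apply contDiff_const

theorem iteratedFDeriv_two_eq_fderiv_fderiv_apply (hψ : ContDiff ℝ 2 ψ) (z e : E) :
    iteratedFDeriv ℝ 2 ψ z ![e, e] = fderiv ℝ (fun z => fderiv ℝ ψ z e) z e := by
  have hdiff : DifferentiableAt ℝ (fderiv ℝ ψ) z :=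
    (hψ.fderiv_right (m := 1) (by norm_num)).differentiable one_ne_zero z
  simp [iteratedFDeriv_two_apply, fderiv_clm_apply hdiff (differentiableAt_const _)]

theorem iteratedDeriv_two_weightedLineIntegral_line (hψ : ContDiff ℝ 2 ψ) (hq : Continuous q)
    (v x e : E) :
    iteratedDeriv 2 (fun s : ℝ => weightedLineIntegral ψ q v (x + s • e)) 0
      = weightedLineIntegral (fun z => iteratedFDeriv ℝ 2 ψ z ![e, e]) q v x := by
  have hfirst : deriv (fun s : ℝ => weightedLineIntegral ψ q v (x + s • e))
      = fun s => weightedLineIntegral (fun z => fderiv ℝ ψ z e) q v (x + s • e) := funext fun s =>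
    (hasDerivAt_weightedLineIntegral_line (hψ.of_le one_le_two) hq v x e s).deriv
  rw [iteratedDeriv_succ, iteratedDeriv_one, hfirst,
    (hasDerivAt_weightedLineIntegral_line (contDiff_fderiv_apply hψ e) hq v x e 0).deriv]
  simp only [zero_smul, add_zero, iteratedFDeriv_two_eq_fderiv_fderiv_apply hψ]

theorem weightedLineIntegral_fderiv {q' : ℝ → ℝ} {v : E} (hψ : ContDiff ℝ 1 ψ)
    (hper : ∀ x, ψ (x + v) = ψ x) (hq : ∀ t, HasDerivAt q (q' t) t) (hq' : Continuous q')
    (hends : q 1 = q 0) (x : E) :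
    weightedLineIntegral (fun z => fderiv ℝ ψ z v) q v x = -weightedLineIntegral ψ q' v x := by
  have hparts := intervalIntegral.integral_mul_deriv_eq_deriv_mul (a := 0) (b := 1)
    (u := fun t : ℝ => ψ (x + t • v)) (u' := fun t : ℝ => fderiv ℝ ψ (x + t • v) v) (v := q)
    (fun t _ => (hψ.differentiable one_ne_zero _).hasFDerivAt.comp_hasDerivAt t
      (hasDerivAt_line x v t)) (fun t _ => hq t)
    (Continuous.intervalIntegrable (by fun_prop) _ _) (hq'.intervalIntegrable _ _)
  simp only [one_smul, zero_smul, add_zero, hper, hends, sub_self, zero_sub] at hparts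
  simp only [weightedLineIntegral]
  linarith

theorem weightedLineIntegral_iteratedFDeriv_two {q' q'' : ℝ → ℝ} {v : E} (hψ : ContDiff ℝ 2 ψ)
    (hper : ∀ x, ψ (x + v) = ψ x) (hq : ∀ t, HasDerivAt q (q' t) t)
    (hq' : ∀ t, HasDerivAt q' (q'' t) t) (hq'' : Continuous q'') (hends : q 1 = q 0)
    (hends' : q' 1 = q' 0) (x : E) :
    weightedLineIntegral (fun z => iteratedFDeriv ℝ 2 ψ z ![v, v]) q v x
      = weightedLineIntegral ψ q'' v x := by
  have hper' (x : E) : fderiv ℝ ψ (x + v) v = fderiv ℝ ψ x v := by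
    rw [← fderiv_comp_add_right]
    simp only [hper]
  have hq'c : Continuous q' := continuous_iff_continuousAt.2 fun t => (hq' t).continuousAt
  simp only [iteratedFDeriv_two_eq_fderiv_fderiv_apply hψ]
  rw [weightedLineIntegral_fderiv (contDiff_fderiv_apply hψ v) hper' hq hq'c hends,
    weightedLineIntegral_fderiv (hψ.of_le one_le_two) hper hq' hq'' hends', neg_neg]

end NormedSpace

section InnerProductSpace

variable {E : Type*} [NormedAddCommGroup E] [InnerProductSpace ℝ E] [FiniteDimensional ℝ E]
  {ι : Type*} [Fintype ι] {ψ : E → ℝ} {q : ℝ → ℝ}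

theorem sum_weightedLineIntegral_iteratedFDeriv_two (hψ : ContDiff ℝ 2 ψ) (hq : Continuous q)
    (b : OrthonormalBasis ι ℝ E) (v x : E) :
    ∑ i, weightedLineIntegral (fun z => iteratedFDeriv ℝ 2 ψ z ![b i, b i]) q v x
      = weightedLineIntegral (Δ ψ) q v x := by
  simp only [weightedLineIntegral, laplacian_eq_iteratedFDeriv_orthonormalBasis ψ b,
    Finset.sum_mul]
  exact (intervalIntegral.integral_finsetSum fun i _ =>
    ((((hψ.continuous_iteratedFDeriv le_rfl).eval_const _).comp (by fun_prop)).mul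
      hq).intervalIntegrable _ _).symm

theorem IsEigenfunction.weightedLineIntegral_nonpos_of_isMax {lam ω : ℝ}
    (hψ : IsEigenfunction ψ lam) (hω : lam < ω ^ 2) {b : OrthonormalBasis ι ℝ E} {i : ι}
    (hper : ∀ x, ψ (x + b i) = ψ x) {q' : ℝ → ℝ} (hq : ∀ t, HasDerivAt q (q' t) t)
    (hq' : ∀ t, HasDerivAt q' (-ω ^ 2 * q t) t) (hends : q 1 = q 0) (hends' : q' 1 = q' 0) {y : E}
    (hmax : ∀ x, weightedLineIntegral ψ q (b i) x ≤ weightedLineIntegral ψ q (b i) y) :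
    weightedLineIntegral ψ q (b i) y ≤ 0 := by
  have hqc : Continuous q := continuous_iff_continuousAt.2 fun t => (hq t).continuousAt
  have hconst (a : ℝ) : weightedLineIntegral ψ (fun t => a * q t) (b i) y
      = a * weightedLineIntegral ψ q (b i) y := by
    simp only [weightedLineIntegral, ← intervalIntegral.integral_const_mul, mul_left_comm]
  have hnonpos (j : ι) :
      weightedLineIntegral (fun z => iteratedFDeriv ℝ 2 ψ z ![b j, b j]) q (b i) y ≤ 0 := by
    rw [← iteratedDeriv_two_weightedLineIntegral_line hψ.contDiff hqc]
    refine iteratedDeriv_two_nonpos_of_isLocalMax ?_ (Eventually.of_forall fun s => ?_)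
    · exact ((continuous_weightedLineIntegral hψ.continuous hqc _).comp
        (by fun_prop)).continuousAt
    · simpa using hmax _
  have hle : -lam * weightedLineIntegral ψ q (b i) y
      ≤ -ω ^ 2 * weightedLineIntegral ψ q (b i) y := by
    calc -lam * weightedLineIntegral ψ q (b i) y = weightedLineIntegral (Δ ψ) q (b i) y := by
          simp only [weightedLineIntegral, hψ.laplacian_eq, mul_assoc,
            intervalIntegral.integral_const_mul]
      _ = ∑ j, weightedLineIntegral (fun z => iteratedFDeriv ℝ 2 ψ z ![b j, b j]) q (b i) y :=
          (sum_weightedLineIntegral_iteratedFDeriv_two hψ.contDiff hqc b _ _).symm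
      _ ≤ weightedLineIntegral (fun z => iteratedFDeriv ℝ 2 ψ z ![b i, b i]) q (b i) y := by
          classical
          rw [← Finset.add_sum_erase _ _ (Finset.mem_univ i)]
          exact add_le_of_nonpos_right (Finset.sum_nonpos fun j _ => hnonpos j)
      _ = -ω ^ 2 * weightedLineIntegral ψ q (b i) y := by
          rw [← hconst]
          exact weightedLineIntegral_iteratedFDeriv_two hψ.contDiff hper hq hq' (by fun_prop) hends
            hends' y
  nlinarith

end InnerProductSpace

end WeightedLineIntegral

section Periodic

variable {n : ℕ}

theorem ZnPeriodic.exists_mem_closedBall_eq {f : EuclideanSpace ℝ (Fin n) → ℝ}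
    (hf : ZnPeriodic n f) (x c : EuclideanSpace ℝ (Fin n)) :
    ∃ y ∈ closedBall c (√n), f y = f x := by
  set y : EuclideanSpace ℝ (Fin n) := WithLp.toLp 2 fun i => x i + ((-⌊x i - c i⌋ : ℤ) : ℝ)
  refine ⟨y, ?_, hf x _⟩
  have hfract (i : Fin n) : dist (y i) (c i) = Int.fract (x i - c i) := by
    have : y i - c i = Int.fract (x i - c i) := by
      simp only [y, Int.cast_neg, ← Int.self_sub_floor]
      ring
    rw [dist_eq, this, abs_of_nonneg (Int.fract_nonneg _)]
  rw [mem_closedBall, EuclideanSpace.dist_eq]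
  refine sqrt_le_sqrt ?_
  calc ∑ i, dist (y i) (c i) ^ 2 ≤ ∑ _i : Fin n, (1 : ℝ) := Finset.sum_le_sum fun i _ => by
        rw [hfract]
        exact pow_le_one₀ (Int.fract_nonneg _) (Int.fract_lt_one _).le
    _ = n := by simp

theorem ZnPeriodic.exists_forall_ge {f : EuclideanSpace ℝ (Fin n) → ℝ} (hf : ZnPeriodic n f)
    (hc : Continuous f) : ∃ y, ∀ x, f x ≤ f y := by
  obtain ⟨y, -, hy⟩ := (isCompact_closedBall 0 (√n)).exists_isMaxOn
    ⟨0, mem_closedBall_self (sqrt_nonneg _)⟩ hc.continuousOn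
  refine ⟨y, fun x => ?_⟩
  obtain ⟨z, hz, hzx⟩ := hf.exists_mem_closedBall_eq x 0
  rw [← hzx]
  exact hy hz

theorem ZnPeriodic.add_single {f : EuclideanSpace ℝ (Fin n) → ℝ} (hf : ZnPeriodic n f)
    (x : EuclideanSpace ℝ (Fin n)) (i : Fin n) : f (x + EuclideanSpace.single i 1) = f x := by
  rw [← hf x (Pi.single i 1)]
  congr 1
  ext j
  by_cases h : j = i <;> simp [h]

theorem ZnPeriodic.neg {f : EuclideanSpace ℝ (Fin n) → ℝ} (hf : ZnPeriodic n f) :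
    ZnPeriodic n (-f) := fun x v => by
  rw [Pi.neg_apply, Pi.neg_apply, hf x v]

theorem ZnPeriodic.weightedLineIntegral {f : EuclideanSpace ℝ (Fin n) → ℝ} (hf : ZnPeriodic n f)
    (q : ℝ → ℝ) (e : EuclideanSpace ℝ (Fin n)) : ZnPeriodic n (weightedLineIntegral f q e) := by
  intro x v
  simp only [_root_.weightedLineIntegral]
  congr! 3 with t
  rw [← hf (x + t • e) v]
  congr 1
  ext j
  simp
  ring

variable {ψ : EuclideanSpace ℝ (Fin n) → ℝ} {lam : ℝ}

theorem IsEigenfunction.weightedLineIntegral_cos_nonpos (hψ : IsEigenfunction ψ lam)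
    (hper : ZnPeriodic n ψ) {k : ℤ} (hk : lam < (2 * π * k) ^ 2) (φ : ℝ) (i : Fin n)
    (x : EuclideanSpace ℝ (Fin n)) :
    weightedLineIntegral ψ (fun t => cos (2 * π * k * t + φ)) (EuclideanSpace.single i 1) x
      ≤ 0 := by
  obtain ⟨y, hy⟩ := (hper.weightedLineIntegral (fun t => cos (2 * π * k * t + φ))
    (EuclideanSpace.single i 1)).exists_forall_ge
    (continuous_weightedLineIntegral hψ.continuous (by fun_prop) _)
  have hphase (t : ℝ) : HasDerivAt (fun t => 2 * π * k * t + φ) (2 * π * k) t := by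
    simpa using ((hasDerivAt_id t).const_mul (2 * π * k)).add_const φ
  have hturn : 2 * π * k * 1 + φ = φ + k * (2 * π) := by ring
  have hb : EuclideanSpace.basisFun (Fin n) ℝ i = EuclideanSpace.single i 1 := by simp
  refine (hy x).trans ?_
  rw [← hb] at hy ⊢
  refine hψ.weightedLineIntegral_nonpos_of_isMax hk
    (q' := fun t => -(2 * π * k) * sin (2 * π * k * t + φ))
    (fun x => by rw [hb, hper.add_single]) (fun t => ?_) (fun t => ?_) ?_ ?_ hy
  · exact (hphase t).cos.congr_deriv (by ring)
  · exact ((hphase t).sin.const_mul _).congr_deriv (by ring)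
  · simp only [hturn, cos_add_int_mul_two_pi, mul_zero, zero_add]
  · simp only [hturn, sin_add_int_mul_two_pi, mul_zero, zero_add]

theorem IsEigenfunction.weightedLineIntegral_cos_eq_zero (hψ : IsEigenfunction ψ lam)
    (hper : ZnPeriodic n ψ) {k : ℤ} (hk : lam < (2 * π * k) ^ 2) (φ : ℝ) (i : Fin n)
    (x : EuclideanSpace ℝ (Fin n)) :
    weightedLineIntegral ψ (fun t => cos (2 * π * k * t + φ)) (EuclideanSpace.single i 1) x
      = 0 := by
  refine le_antisymm (hψ.weightedLineIntegral_cos_nonpos hper hk φ i x) ?_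
  have hopp := hψ.weightedLineIntegral_cos_nonpos hper hk (φ + π) i x
  simp only [weightedLineIntegral, ← add_assoc, cos_add_pi, mul_neg,
    intervalIntegral.integral_neg] at hopp ⊢
  linarith

theorem lt_two_pi_mul_sq {D : ℕ} (hD : lam ≤ D ^ 2) {k : ℤ} (hk : D < k.natAbs) :
    lam < (2 * π * k) ^ 2 := by
  have hDk : (D : ℝ) < |(k : ℝ)| := by
    rw [← Int.cast_abs, ← Int.natCast_natAbs]
    exact_mod_cast hk
  calc lam ≤ (D : ℝ) ^ 2 := hD
    _ < |(k : ℝ)| ^ 2 := by gcongr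
    _ ≤ (2 * π) ^ 2 * |(k : ℝ)| ^ 2 :=
        le_mul_of_one_le_left (by positivity) (by nlinarith [pi_gt_three])
    _ = (2 * π * k) ^ 2 := by rw [sq_abs]; ring

theorem IsEigenfunction.exists_polynomial_norm_eval_eq (hψ : IsEigenfunction ψ lam)
    (hper : ZnPeriodic n ψ) {D : ℕ} (hD : lam ≤ D ^ 2) (i : Fin n)
    (x : EuclideanSpace ℝ (Fin n)) :
    ∃ P : Polynomial ℂ, P.natDegree ≤ 2 * D ∧
      ∀ t : ℝ, ‖P.eval (𝐞 t : ℂ)‖ = |ψ (x + t • EuclideanSpace.single i 1)| := by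
  set f : ℝ → ℝ := fun t => ψ (x + t • EuclideanSpace.single i 1) with hf
  have hψc := hψ.continuous
  have hfper : Function.Periodic (fun t => (f t : ℂ)) 1 := fun t => by
    simp only [hf, add_smul, one_smul, ← add_assoc, hper.add_single]
  set F : C(UnitAddCircle, ℂ) := ⟨hfper.lift, continuous_coinduced_dom.mpr
    (show Continuous fun t => (f t : ℂ) by fun_prop)⟩
  have hF (t : ℝ) : F (t : UnitAddCircle) = f t := hfper.lift_coe t
  have hcoeff (k : ℤ) (hk : D < k.natAbs) : fourierCoeff F k = 0 :=
    fourierCoeff_eq_zero_of_integral_mul_cos_eq_zero (f := f) (by fun_prop) hF fun φ =>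
      hψ.weightedLineIntegral_cos_eq_zero hper (lt_two_pi_mul_sq hD hk) φ i x
  obtain ⟨P, hdeg, hP⟩ := exists_polynomial_eval_eq_of_fourierCoeff_eq_zero hcoeff
  refine ⟨P, hdeg, fun t => ?_⟩
  rw [hP, hF, norm_mul, norm_pow, Circle.norm_coe, one_pow, one_mul, Complex.norm_real,
    norm_eq_abs]

end Periodic

section Doubling

theorem norm_le_mul_of_forall_abs_le {n : ℕ} {y : EuclideanSpace ℝ (Fin n)} {h : ℝ} (hh : 0 ≤ h)
    (hy : ∀ i, |y i| ≤ h) : ‖y‖ ≤ n * h := by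
  rw [EuclideanSpace.norm_eq]
  refine sqrt_le_iff.2 ⟨by positivity, ?_⟩
  calc ∑ i, ‖y i‖ ^ 2 ≤ ∑ _i : Fin n, h ^ 2 :=
        Finset.sum_le_sum fun i _ => pow_le_pow_left₀ (norm_nonneg _) (hy i) 2
    _ = n * h ^ 2 := by simp
    _ ≤ (n * h) ^ 2 := by
        rw [mul_pow]
        gcongr
        exact_mod_cast Nat.le_self_pow two_ne_zero n

variable {n : ℕ} {ψ : EuclideanSpace ℝ (Fin n) → ℝ} {lam h T M : ℝ} {D : ℕ}

theorem IsEigenfunction.abs_line_le (hψ : IsEigenfunction ψ lam) (hper : ZnPeriodic n ψ)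
    (hD : lam ≤ D ^ 2) (hD0 : 0 < D) (i : Fin n) (x : EuclideanSpace ℝ (Fin n)) {a : ℝ}
    (hh : 0 < h) (hT : 1 ≤ T) (hTh : T * h ≤ 1 / 4)
    (hM : ∀ t ∈ closedBall a h, |ψ (x + t • EuclideanSpace.single i 1)| ≤ M)
    {t : ℝ} (ht : t ∈ closedBall a (T * h)) :
    |ψ (x + t • EuclideanSpace.single i 1)| ≤ (5 * (T + 1)) ^ (2 * D) * M := by
  obtain ⟨P, hdeg, hP⟩ := hψ.exists_polynomial_norm_eval_eq hper hD i x
  simp only [← hP] at hM ⊢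
  exact norm_eval_fourierChar_le_of_arc (by omega) hdeg hh hT hTh hM ht

theorem IsEigenfunction.abs_le_of_cube (hψ : IsEigenfunction ψ lam) (hper : ZnPeriodic n ψ)
    (hD : lam ≤ D ^ 2) (hD0 : 0 < D) {z : EuclideanSpace ℝ (Fin n)} (hh : 0 < h) (hT : 1 ≤ T)
    (hTh : T * h ≤ 1 / 4) (hM : ∀ x, (∀ i, |x i - z i| ≤ h) → |ψ x| ≤ M) (s : Finset (Fin n)) :
    ∀ x, (∀ i ∈ s, |x i - z i| ≤ T * h) → (∀ i ∉ s, |x i - z i| ≤ h) →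
      |ψ x| ≤ ((5 * (T + 1)) ^ (2 * D)) ^ s.card * M := by
  induction s using Finset.induction_on with
  | empty => exact fun x _ hx => by simpa using hM x fun i => hx i (Finset.notMem_empty i)
  | insert i s hi ih =>
    intro x hin hout
    rw [Finset.card_insert_of_notMem hi, pow_succ', mul_assoc]
    have hline := hψ.abs_line_le hper hD hD0 i x (a := z i - x i) hh hT hTh
      (M := ((5 * (T + 1)) ^ (2 * D)) ^ s.card * M) (fun t ht => ?_) (t := 0) ?_
    · simpa using hline
    · refine ih _ (fun j hj => ?_) fun j hj => ?_
      · have hji : j ≠ i := fun h => hi (h ▸ hj)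
        simpa [hji] using hin j (Finset.mem_insert_of_mem hj)
      · obtain rfl | hji := eq_or_ne j i
        · rw [mem_closedBall, dist_eq] at ht
          convert ht using 2
          simp
          ring
        · simpa [hji] using hout j (by simp [hji, hj])
    · simpa [dist_eq] using hin i (Finset.mem_insert_self i s)

theorem IsEigenfunction.abs_le_of_closedBall (hψ : IsEigenfunction ψ lam) (hper : ZnPeriodic n ψ)
    (hn : 0 < n) (hD : lam ≤ D ^ 2) (hD0 : 0 < D) {z : EuclideanSpace ℝ (Fin n)} {d : ℝ}
    (hd : 0 < d) (hd' : d ≤ 1 / 4) (hM : ∀ x ∈ closedBall z (d / 4), |ψ x| ≤ M)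
    {x : EuclideanSpace ℝ (Fin n)} (hx : x ∈ closedBall z d) :
    |ψ x| ≤ ((5 * (4 * n + 1)) ^ (2 * D)) ^ n * M := by
  have hn' : (1 : ℝ) ≤ n := by exact_mod_cast hn
  have hside : 4 * (n : ℝ) * (d / (4 * n)) = d := by field_simp
  have hdiam : (n : ℝ) * (d / (4 * n)) = d / 4 := by field_simp
  have hcube := hψ.abs_le_of_cube hper hD hD0 (z := z) (h := d / (4 * n)) (T := 4 * n) (M := M)
    (by positivity) (by linarith) (by rwa [hside]) (fun y hy => hM y ?_) Finset.univ x ?_ (by simp)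
  · simpa using hcube
  · rw [mem_closedBall, dist_eq_norm, ← hdiam]
    exact norm_le_mul_of_forall_abs_le (by positivity) (by simpa using hy)
  · intro i _
    rw [hside]
    rw [mem_closedBall, dist_eq_norm] at hx
    simpa using (PiLp.norm_apply_le (x - z) i).trans hx

end Doubling

section SparseIndices

theorem two_pow_card_filter_mul_le {M : ℕ → ℝ} (hmono : Monotone M) (N : ℕ) :
    2 ^ ((Finset.range N).filter fun i => 2 * M i < M (i + 1)).card * M 0 ≤ M N := by
  induction N with
  | zero => simp
  | succ N ih =>
    rw [Finset.range_add_one, Finset.filter_insert]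
    split_ifs with h
    · rw [Finset.card_insert_of_notMem (by simp), pow_succ]
      linarith
    · exact ih.trans (hmono N.le_succ)

theorem card_filter_two_mul_lt_le {M : ℕ → ℝ} (hmono : Monotone M) (h0 : 0 < M 0) {N B : ℕ}
    (hB : M N ≤ 2 ^ B * M 0) :
    ((Finset.range N).filter fun i => 2 * M i < M (i + 1)).card ≤ B :=
  (pow_le_pow_iff_right₀ one_lt_two).1
    (le_of_mul_le_mul_right ((two_pow_card_filter_mul_le hmono N).trans hB) h0)

theorem le_two_mul_card_filter_exists_notMem {J : Finset ℕ} {K L : ℕ} (hL : 0 < L)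
    (hJ : 2 * J.card ≤ K * L) :
    K ≤ 2 * ((Finset.range K).filter fun b => ∃ j < L, 2 * L * b + j ∉ J).card := by
  set full := (Finset.range K).filter fun b => ¬ ∃ j < L, 2 * L * b + j ∉ J with hfull
  have hsplit := Finset.card_filter_add_card_filter_not (s := Finset.range K)
    (fun b => ∃ j < L, 2 * L * b + j ∉ J)
  rw [Finset.card_range, ← hfull] at hsplit
  have hcard : (full ×ˢ Finset.range L).card ≤ J.card := by
    refine Finset.card_le_card_of_injOn (fun p => 2 * L * p.1 + p.2) ?_ ?_
    · rintro ⟨b, j⟩ hp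
      simp only [hfull, Finset.coe_product, Set.mem_prod, Finset.mem_coe, Finset.mem_filter,
        Finset.mem_range, not_exists, not_and, not_not] at hp
      exact hp.1.2 j hp.2
    · have hdiv (b j : ℕ) (hj : j < L) : (2 * L * b + j) / (2 * L) = b := by
        rw [Nat.mul_add_div (by omega), Nat.div_eq_of_lt (by omega), add_zero]
      rintro ⟨b, j⟩ hp ⟨b', j'⟩ hp' h
      simp only [Finset.coe_product, Set.mem_prod, Finset.mem_coe, Finset.mem_range] at hp hp' h
      obtain rfl : b = b' := by rw [← hdiv b j hp.2, h, hdiv b' j' hp'.2]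
      rw [Nat.add_left_cancel h]
  rw [Finset.card_product, Finset.card_range] at hcard
  have hhalf : 2 * full.card ≤ K := Nat.le_of_mul_le_mul_right (by linarith) hL
  omega

theorem exists_sparse_finset_notMem {J : Finset ℕ} {K L : ℕ} (hL : 0 < L)
    (hJ : 2 * J.card ≤ K * L) :
    ∃ I : Finset ℕ, I.card ≤ K ∧ K ≤ 2 * I.card ∧ (∀ i ∈ I, i < 2 * K * L ∧ i ∉ J) ∧
      ∀ i ∈ I, ∀ i' ∈ I, i < i' → i + L ≤ i' := by
  classical
  set G := (Finset.range K).filter fun b => ∃ j < L, 2 * L * b + j ∉ J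
  have hj (b : ℕ) : ∃ j < L, b ∈ G → 2 * L * b + j ∉ J := by
    by_cases hb : b ∈ G
    · obtain ⟨j, hjL, hj⟩ := (Finset.mem_filter.1 hb).2
      exact ⟨j, hjL, fun _ => hj⟩
    · exact ⟨0, hL, fun h => absurd h hb⟩
  choose j hjL hj using hj
  have hblock {b b' : ℕ} (h : b < b') : 2 * L * b + j b + L ≤ 2 * L * b' + j b' := by
    have hmul : 2 * L * (b + 1) ≤ 2 * L * b' := Nat.mul_le_mul_left _ h
    have := hjL b
    rw [Nat.mul_add_one] at hmul
    omega
  have hstrict : StrictMono fun b => 2 * L * b + j b := fun b b' h => by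
    have := hblock h
    change 2 * L * b + j b < 2 * L * b' + j b'
    omega
  have hcard := Finset.card_image_of_injective G hstrict.injective
  refine ⟨G.image fun b => 2 * L * b + j b, ?_, ?_, ?_, ?_⟩
  · rw [hcard]
    exact (Finset.card_filter_le _ _).trans_eq (Finset.card_range K)
  · rw [hcard]
    exact le_two_mul_card_filter_exists_notMem hL hJ
  · simp only [Finset.forall_mem_image]
    refine fun b hb => ⟨?_, hj b hb⟩
    have := hblock (Finset.mem_range.1 (Finset.mem_filter.1 hb).1)
    have := hjL K
    rw [mul_right_comm 2 K L]
    omega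
  · simp only [Finset.forall_mem_image]
    exact fun b _ b' _ h => hblock (hstrict.lt_iff_lt.1 h)

theorem exists_sparse_finset_le_two_mul {M : ℕ → ℝ} (hmono : Monotone M) (h0 : 0 < M 0)
    {K L B : ℕ} (hL : 0 < L) (hB : M (2 * K * L) ≤ 2 ^ B * M 0) (hKL : 2 * B ≤ K * L) :
    ∃ I : Finset ℕ, I.card ≤ K ∧ K ≤ 2 * I.card ∧
      (∀ i ∈ I, i < 2 * K * L ∧ M (i + 1) ≤ 2 * M i) ∧
      ∀ i ∈ I, ∀ i' ∈ I, i < i' → i + L ≤ i' := by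
  obtain ⟨I, hIK, hKI, hI, hsparse⟩ := exists_sparse_finset_notMem hL
    ((Nat.mul_le_mul_left 2 (card_filter_two_mul_lt_le hmono h0 hB)).trans hKL)
  refine ⟨I, hIK, hKI, fun i hi => ⟨(hI i hi).1, ?_⟩, hsparse⟩
  simpa [(hI i hi).1] using (hI i hi).2

theorem exists_finset_radii_le_two_mul_of_monotoneOn {m : ℝ → ℝ} {d : ℝ}
    (hm : MonotoneOn m (Set.Ici (d / 2))) (hpos : 0 < m (d / 2)) (hd : 0 < d) {K L B : ℕ}
    (hK : 0 < K) (hL : 0 < L) (hB : m d ≤ 2 ^ B * m (d / 2)) (hKL : 2 * B ≤ K * L) :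
    ∃ R : Finset ℝ, R.card ≤ K ∧ K ≤ 2 * R.card ∧
      (∀ r ∈ R, d / 2 ≤ r ∧ r + d / (4 * K * L) ≤ d ∧ m (r + d / (4 * K * L)) ≤ 2 * m r) ∧
      (R : Set ℝ).Pairwise fun r r' => d / (4 * K) ≤ |r - r'| := by
  set w : ℝ := d / (4 * K * L) with hw
  have hw0 : 0 < w := by positivity
  have hwL : d / (4 * K) = w * L := by
    rw [hw]
    field_simp
  set s : ℕ → ℝ := fun i => d / 2 + i * w with hs
  have hsmono : StrictMono s := fun i i' h => by
    simp only [hs]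
    gcongr
  have hsfirst : s 0 = d / 2 := by simp [hs]
  have hssucc (i : ℕ) : s (i + 1) = s i + w := by
    simp only [hs]
    push_cast
    ring
  have hslast : s (2 * K * L) = d := by
    simp only [hs, hw]
    push_cast
    field_simp
    ring
  have hsge (i : ℕ) : d / 2 ≤ s i := hsfirst ▸ hsmono.monotone i.zero_le
  obtain ⟨I, hIK, hKI, hI, hsparse⟩ := exists_sparse_finset_le_two_mul (M := m ∘ s)
    (fun i i' h => hm (hsge i) (hsge i') (hsmono.monotone h)) (by simpa [hsfirst]) hL
    (by simpa [hsfirst, hslast]) hKL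
  have hgap {i i' : ℕ} (hi : i ∈ I) (hi' : i' ∈ I) (h : i < i') : w * L ≤ s i' - s i := by
    have hle : (i : ℝ) + L ≤ i' := by exact_mod_cast hsparse i hi i' hi' h
    simp only [hs]
    linarith [mul_le_mul_of_nonneg_right hle hw0.le]
  refine ⟨I.map ⟨s, hsmono.injective⟩, by simpa, by simpa, ?_, ?_⟩
  · simp only [Finset.forall_mem_map, Function.Embedding.coeFn_mk, ← hssucc]
    exact fun i hi => ⟨hsge i, hslast ▸ hsmono.monotone (hI i hi).1, (hI i hi).2⟩
  · rw [hwL, Finset.coe_map]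
    rintro _ ⟨i, hi, rfl⟩ _ ⟨i', hi', rfl⟩ h
    obtain h | h := (ne_of_apply_ne s h).lt_or_gt
    · exact (hgap hi hi' h).trans (abs_sub_comm (s i) (s i') ▸ le_abs_self _)
    · exact (hgap hi' hi h).trans (le_abs_self _)

theorem exists_finset_radii_le_two_mul {X : Type*} [PseudoMetricSpace X] [ProperSpace X]
    {φ : X → ℝ} (hφ : Continuous φ) {z : X} {d : ℝ} (hd : 0 < d) {K L B : ℕ} (hK : 0 < K)
    (hL : 0 < L) (hKL : 2 * B ≤ K * L)
    (hgrowth : ∀ p, IsMaxOn φ (closedBall z (d / 2)) p →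
      0 < φ p ∧ ∀ y ∈ closedBall z d, φ y ≤ 2 ^ B * φ p) :
    ∃ R : Finset ℝ, R.card ≤ K ∧ K ≤ 2 * R.card ∧
      (∀ r ∈ R, r + d / (4 * K * L) ≤ d ∧ ∃ p ∈ closedBall z r, IsMaxOn φ (closedBall z r) p ∧
        0 < φ p ∧ ∀ y ∈ closedBall z (r + d / (4 * K * L)), φ y ≤ 2 * φ p) ∧
      (R : Set ℝ).Pairwise fun r r' => d / (4 * K) ≤ |r - r'| := by
  have hexists (r : ℝ) : ∃ p, d / 2 ≤ r → p ∈ closedBall z r ∧ IsMaxOn φ (closedBall z r) p := by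
    by_cases hr : d / 2 ≤ r
    · obtain ⟨p, hp⟩ := (isCompact_closedBall z r).exists_isMaxOn
        ⟨z, mem_closedBall_self (by linarith)⟩ hφ.continuousOn
      exact ⟨p, fun _ => hp⟩
    · exact ⟨z, fun h => absurd h hr⟩
  choose p hp using hexists
  have hmono : MonotoneOn (fun r => φ (p r)) (Set.Ici (d / 2)) := fun r hr r' hr' h =>
    (hp r' hr').2 (closedBall_subset_closedBall h (hp r hr).1)
  obtain ⟨hpos, hB⟩ := hgrowth (p (d / 2)) (hp _ le_rfl).2
  obtain ⟨R, hRK, hKR, hR, hsep⟩ := exists_finset_radii_le_two_mul_of_monotoneOn hmono hpos hd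
    hK hL (hB (p d) (hp d (by linarith)).1) hKL
  refine ⟨R, hRK, hKR, fun r hr => ?_, hsep⟩
  obtain ⟨hdr, hrd, hdouble⟩ := hR r hr
  have hw : 0 ≤ d / (4 * K * L) := by positivity
  exact ⟨hrd, p r, (hp r hdr).1, (hp r hdr).2,
    hpos.trans_le (hmono Set.self_mem_Ici hdr hdr),
    fun y hy => ((hp _ (by linarith)).2 hy).trans hdouble⟩

end SparseIndices

section SignChange

theorem exp_le_inv_one_sub {t s : ℝ} (ht : t ≤ s) (hs : s < 1) : exp t ≤ (1 - s)⁻¹ := by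
  rw [← inv_inv (exp t), ← exp_neg]
  exact inv_anti₀ (by linarith) (by linarith [add_one_le_exp (-t)])

variable {E : Type*} [NormedAddCommGroup E] [InnerProductSpace ℝ E]
  {ψ : E → ℝ} {lam d s w μ A : ℝ} {z p x : E}

/-- The paraboloid `1 - λ‖y - z‖² / n`, a strict supersolution of `Δu + λu = 0`, truncated at `1/2`
so that one can divide by it everywhere. -/
def truncatedParaboloid (lam : ℝ) (z y : E) : ℝ := max (1 - lam / finrank ℝ E * ‖y - z‖ ^ 2) (1 / 2)

theorem half_le_truncatedParaboloid (lam : ℝ) (z y : E) : 1 / 2 ≤ truncatedParaboloid lam z y :=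
  le_max_right _ _

theorem truncatedParaboloid_pos (lam : ℝ) (z y : E) : 0 < truncatedParaboloid lam z y :=
  one_half_pos.trans_le (half_le_truncatedParaboloid lam z y)

theorem truncatedParaboloid_le_one (hlam : 0 ≤ lam) (z y : E) : truncatedParaboloid lam z y ≤ 1 :=
  max_le (sub_le_self _ (by positivity)) (by norm_num)

@[fun_prop]
theorem continuous_truncatedParaboloid (lam : ℝ) (z : E) :
    Continuous (truncatedParaboloid lam z) := by
  unfold truncatedParaboloid
  fun_prop

theorem one_sub_le_paraboloid (hlam : 0 ≤ lam) (hsmall : lam * d ^ 2 ≤ 1 / 100)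
    (hx : x ∈ closedBall z d) : 99 / 100 ≤ 1 - lam / finrank ℝ E * ‖x - z‖ ^ 2 := by
  have hle : lam / finrank ℝ E * ‖x - z‖ ^ 2 ≤ lam * d ^ 2 := by
    rw [mem_closedBall, dist_eq_norm] at hx
    gcongr
    obtain h | h := Nat.eq_zero_or_pos (finrank ℝ E)
    · simpa [h] using hlam
    · exact div_le_self hlam (by exact_mod_cast h)
  linarith

theorem truncatedParaboloid_of_mem (hlam : 0 ≤ lam) (hsmall : lam * d ^ 2 ≤ 1 / 100)
    (hx : x ∈ closedBall z d) :
    truncatedParaboloid lam z x = 1 - lam / finrank ℝ E * ‖x - z‖ ^ 2 :=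
  max_eq_left (by linarith [one_sub_le_paraboloid hlam hsmall hx])

/-- The quotient of `-ψ` by the paraboloid around `z`; unlike `-ψ` itself, it has no positive
maximum in the interior of a small ball around `z`. -/
def negRatio (ψ : E → ℝ) (lam : ℝ) (z y : E) : ℝ := -ψ y / truncatedParaboloid lam z y

theorem negRatio_mul_truncatedParaboloid (ψ : E → ℝ) (lam : ℝ) (z y : E) :
    negRatio ψ lam z y * truncatedParaboloid lam z y = -ψ y :=
  div_mul_cancel₀ _ (truncatedParaboloid_pos lam z y).ne'

theorem continuous_negRatio (hψ : Continuous ψ) (lam : ℝ) (z : E) :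
    Continuous (negRatio ψ lam z) :=
  hψ.neg.div (continuous_truncatedParaboloid lam z) fun y => (truncatedParaboloid_pos lam z y).ne'

theorem negRatio_le_two_mul_abs (ψ : E → ℝ) (lam : ℝ) (z y : E) :
    negRatio ψ lam z y ≤ 2 * |ψ y| := by
  rw [negRatio, div_le_iff₀ (truncatedParaboloid_pos lam z y)]
  nlinarith [neg_le_abs (ψ y), abs_nonneg (ψ y), half_le_truncatedParaboloid lam z y]

theorem neg_le_of_negRatio_le (hlam : 0 ≤ lam) (hμ : 0 ≤ μ) (h : negRatio ψ lam z x ≤ μ) :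
    -ψ x ≤ μ := by
  rw [← negRatio_mul_truncatedParaboloid ψ lam z x]
  exact (mul_le_mul_of_nonneg_right h (truncatedParaboloid_pos lam z x).le).trans
    (mul_le_of_le_one_right hμ (truncatedParaboloid_le_one hlam z x))

variable [FiniteDimensional ℝ E]

theorem IsEigenfunction.abs_le_of_eq_zero (hψ : IsEigenfunction ψ lam) (hlam : 0 ≤ lam)
    (hd : 0 < d) (hsmall : lam * d ^ 2 ≤ 1 / 100) (hz : ψ z = 0)
    (hA : ∀ y ∈ closedBall z (d / 2), -ψ y ≤ A) (hx : x ∈ closedBall z (d / 4)) :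
    |ψ x| ≤ 2 ^ (finrank ℝ E + 2) * A := by
  have hA0 : 0 ≤ A := by simpa [hz] using hA z (mem_closedBall_self (by positivity))
  have hradius : (1 + 1) * (d / 4) = d / 2 := by ring
  have hharnack := hψ.add_le_of_neg_le (x := x) (p := z) (δ := 1) (w := d / 4) hlam hA0
    (by positivity) zero_le_one (by simpa using hx) (fun y hy => by
      rw [hradius] at hy
      linarith [hA y hy])
  have hexp : exp (lam * (d / 4) ^ 2 / 8) ≤ (1 - 1 / 100)⁻¹ :=
    exp_le_inv_one_sub (by linarith) (by norm_num)
  have hcenter : ψ z + A + lam * A * ((1 + 1) * (d / 4)) ^ 2 / 8 ≤ (1 + 1 / 100) * A := by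
    rw [hz]
    nlinarith
  have hupper : ψ x + A ≤ 2 ^ (finrank ℝ E + 2) * A := by
    calc ψ x + A ≤ (1 + 1) ^ (finrank ℝ E + 1)
          * ((1 - 1 / 100)⁻¹ * ((1 + 1 / 100) * A)) := by
          have : 0 ≤ ψ z := hz.ge
          exact hharnack.trans (by gcongr)
      _ ≤ (1 + 1) ^ (finrank ℝ E + 1) * (2 * A) :=
          mul_le_mul_of_nonneg_left (by linarith) (by positivity)
      _ = 2 ^ (finrank ℝ E + 2) * A := by ring
  have hlower := hA x (closedBall_subset_closedBall (by linarith) hx)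
  have hone : (1 : ℝ) ≤ 2 ^ (finrank ℝ E + 2) := one_le_pow₀ one_le_two
  exact abs_le.2 ⟨by linarith [le_mul_of_one_le_left hA0 hone], by linarith⟩

theorem IsEigenfunction.neg_of_forall_ge (hψ : IsEigenfunction ψ lam) (hlam : 0 ≤ lam)
    (hw : 0 < w) (hsmall : lam * w ^ 2 ≤ 1 / 100) (hμ : 0 < μ) (hp : ψ p ≤ -(99 / 100) * μ)
    (hge : ∀ y ∈ closedBall p w, -(2 * μ) ≤ ψ y)
    (hx : x ∈ closedBall p (w / (20 * (finrank ℝ E + 1)))) : ψ x < 0 := by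
  set N := finrank ℝ E
  set δ : ℝ := 1 / (10 * (N + 1)) with hδ
  have hδ0 : 0 < δ := by positivity
  have hδ1 : δ ≤ 1 := by
    rw [hδ, div_le_one (by positivity)]
    linarith [N.cast_nonneg (α := ℝ)]
  have hradius : (1 + δ) * (w / (1 + δ)) = w := by field_simp
  have hradius_le : w / (1 + δ) ≤ w := div_le_self hw.le (by linarith)
  have hdist : dist x p ≤ δ * (w / (1 + δ)) := by
    calc dist x p ≤ w / (20 * (N + 1)) := hx
      _ = δ * (w / 2) := by
          rw [hδ]
          field_simp
          norm_num
      _ ≤ δ * (w / (1 + δ)) := by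
          gcongr
          linarith
  have hharnack := hψ.add_le_of_neg_le (x := x) (p := p) (δ := δ) (w := w / (1 + δ)) hlam
    (A := 2 * μ) (by positivity) (by positivity) hδ0.le hdist (by rwa [hradius])
  rw [hradius] at hharnack
  have hcenter : ψ p + 2 * μ + lam * (2 * μ) * w ^ 2 / 8 ≤ (1 + 2 / 100) * μ := by
    linarith [mul_le_mul_of_nonneg_left hsmall hμ.le]
  have hexp : exp (lam * (w / (1 + δ)) ^ 2 / 8) ≤ (1 - 1 / 100)⁻¹ := by
    refine exp_le_inv_one_sub ?_ (by norm_num)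
    have : lam * (w / (1 + δ)) ^ 2 ≤ lam * w ^ 2 := by gcongr
    linarith
  have hpow : (1 + δ) ^ (N + 1) ≤ (1 - 1 / 10)⁻¹ := by
    calc (1 + δ) ^ (N + 1) ≤ exp δ ^ (N + 1) := by
          gcongr
          linarith [add_one_le_exp δ]
      _ = exp (1 / 10) := by
          rw [← exp_nat_mul, hδ]
          congr 1
          push_cast
          field_simp
      _ ≤ (1 - 1 / 10)⁻¹ := exp_le_inv_one_sub le_rfl (by norm_num)
  have hcenter0 : 0 ≤ ψ p + 2 * μ := by linarith [hge p (mem_closedBall_self hw.le)]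
  have hxp : ψ x + 2 * μ ≤ (1 - 1 / 10)⁻¹ * ((1 - 1 / 100)⁻¹ * ((1 + 2 / 100) * μ)) :=
    hharnack.trans (by gcongr)
  norm_num at hxp
  linarith

theorem IsEigenfunction.dist_eq_of_isMaxOn_negRatio (hψ : IsEigenfunction ψ lam) (hlam : 0 < lam)
    (hdim : 0 < finrank ℝ E) (hsmall : lam * s ^ 2 ≤ 1 / 100) (hp : p ∈ closedBall z s)
    (hmax : IsMaxOn (negRatio ψ lam z) (closedBall z s) p) (hpos : 0 < negRatio ψ lam z p) :
    dist p z = s := by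
  set μ := negRatio ψ lam z p with hμ
  by_contra hne
  set c := μ * lam / finrank ℝ E
  have hc : c * finrank ℝ E = μ * lam := div_mul_cancel₀ _ (by positivity)
  have hvalue {y : E} (hy : y ∈ closedBall z s) :
      -ψ y + c * ‖y - z‖ ^ 2 = (negRatio ψ lam z y - μ) * truncatedParaboloid lam z y + μ := by
    rw [sub_mul, negRatio_mul_truncatedParaboloid, truncatedParaboloid_of_mem hlam.le hsmall hy]
    ring
  have hlocal : IsLocalMax (-ψ + c • fun y => ‖y - z‖ ^ 2) p := by
    filter_upwards [isOpen_ball.mem_nhds (lt_of_le_of_ne hp hne)] with y hy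
    have hy := ball_subset_closedBall hy
    change -ψ y + c * ‖y - z‖ ^ 2 ≤ -ψ p + c * ‖p - z‖ ^ 2
    rw [hvalue hy, hvalue hp, ← hμ, sub_self, zero_mul, zero_add]
    have hle : negRatio ψ lam z y ≤ μ := hmax hy
    linarith [mul_nonpos_of_nonpos_of_nonneg (sub_nonpos.2 hle)
      (truncatedParaboloid_pos lam z y).le]
  have hsq : ContDiff ℝ 2 (c • fun y => ‖y - z‖ ^ 2) := (contDiff_norm_sub_sq z).const_smul c
  have hLap : Δ (-ψ + c • fun y => ‖y - z‖ ^ 2) p = lam * ψ p + 2 * (lam * μ) := by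
    rw [hψ.neg.contDiff.contDiffAt.laplacian_add hsq.contDiffAt, laplacian_neg,
      laplacian_smul _ (contDiff_norm_sub_sq z).contDiffAt, Pi.neg_apply, hψ.laplacian_eq,
      laplacian_norm_sub_sq, smul_eq_mul]
    linear_combination 2 * hc
  have hLap_nonpos := hLap.ge.trans
    (laplacian_nonpos_of_isLocalMax (hψ.neg.contDiff.add hsq).contDiffAt hlocal)
  have := neg_le_of_negRatio_le (ψ := ψ) hlam.le hpos.le hμ.ge
  nlinarith

theorem IsEigenfunction.neg_of_isMaxOn_negRatio (hψ : IsEigenfunction ψ lam) (hlam : 0 ≤ lam)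
    (hw : 0 < w) (hsw : s + w ≤ d) (hsmall : lam * d ^ 2 ≤ 1 / 100) (hp : p ∈ closedBall z s)
    (hpos : 0 < negRatio ψ lam z p)
    (hle : ∀ y ∈ closedBall z (s + w), negRatio ψ lam z y ≤ 2 * negRatio ψ lam z p)
    (hx : x ∈ closedBall p (w / (20 * (finrank ℝ E + 1)))) : ψ x < 0 := by
  have hs : 0 ≤ s := dist_nonneg.trans hp
  have hpd : p ∈ closedBall z d := closedBall_subset_closedBall (by linarith) hp
  refine hψ.neg_of_forall_ge (μ := negRatio ψ lam z p) hlam hw ?_ hpos ?_ (fun y hy => ?_) hx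
  · refine le_trans ?_ hsmall
    gcongr
    linarith
  · have hvalue := negRatio_mul_truncatedParaboloid ψ lam z p
    rw [truncatedParaboloid_of_mem hlam hsmall hpd] at hvalue
    nlinarith [one_sub_le_paraboloid hlam hsmall hpd]
  · have hyz : y ∈ closedBall z (s + w) :=
      (dist_triangle y p z).trans (by linarith [mem_closedBall.1 hy, mem_closedBall.1 hp])
    linarith [neg_le_of_negRatio_le hlam (by positivity) (hle y hyz)]

section Periodic

variable {n D : ℕ} {ψ : EuclideanSpace ℝ (Fin n) → ℝ} {lam d : ℝ}
  {z p x y : EuclideanSpace ℝ (Fin n)}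

/-- An exponent `B`, linear in `D ≥ √λ`, such that the maxima of `negRatio ψ lam z` over concentric
balls of radii `d / 2` and `d` differ by a factor of at most `2 ^ B`. -/
def growthExponent (n D : ℕ) : ℕ := (n + 5) * (2 * D) * n + n + 3

theorem two_mul_pow_mul_two_pow_le (n D : ℕ) :
    2 * (((5 * (4 * n + 1) : ℝ) ^ (2 * D)) ^ n * 2 ^ (n + 2)) ≤ 2 ^ growthExponent n D := by
  have hbase : (5 * (4 * n + 1) : ℝ) ≤ 2 ^ (n + 5) := by
    have hn : (n : ℝ) ≤ 2 ^ n := by exact_mod_cast Nat.lt_two_pow_self.le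
    have hone : (1 : ℝ) ≤ 2 ^ n := one_le_pow₀ one_le_two
    rw [pow_add]
    linarith
  calc 2 * (((5 * (4 * n + 1) : ℝ) ^ (2 * D)) ^ n * 2 ^ (n + 2))
      ≤ 2 * (((2 ^ (n + 5)) ^ (2 * D)) ^ n * 2 ^ (n + 2)) := by gcongr
    _ = 2 ^ growthExponent n D := by
        rw [growthExponent, add_assoc, pow_add 2 (_ * n), pow_mul 2 _ n, pow_mul 2 (n + 5),
          pow_succ 2 (n + 2)]
        ring

theorem IsEigenfunction.negRatio_growth (hψ : IsEigenfunction ψ lam) (hper : ZnPeriodic n ψ)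
    (hn : 0 < n) (hlam : 0 ≤ lam) (hD : lam ≤ D ^ 2) (hD0 : 0 < D) (hd : 0 < d) (hd' : d ≤ 1 / 4)
    (hsmall : lam * d ^ 2 ≤ 1 / 100) (hz : ψ z = 0) (hx : x ∈ closedBall z d) (hxpos : 0 < ψ x)
    (hmax : IsMaxOn (negRatio ψ lam z) (closedBall z (d / 2)) p) :
    0 < negRatio ψ lam z p ∧ ∀ y ∈ closedBall z d,
      negRatio ψ lam z y ≤ 2 ^ growthExponent n D * negRatio ψ lam z p := by
  set A := negRatio ψ lam z p
  set C : ℝ := ((5 * (4 * n + 1)) ^ (2 * D)) ^ n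
  have hA : 0 ≤ A := by
    have hz' : negRatio ψ lam z z ≤ A := hmax (mem_closedBall_self (by positivity))
    simpa [negRatio, hz] using hz'
  have hinner (y : EuclideanSpace ℝ (Fin n)) (hy : y ∈ closedBall z (d / 4)) :
      |ψ y| ≤ 2 ^ (n + 2) * A := by
    have := hψ.abs_le_of_eq_zero hlam hd hsmall hz
      (fun y hy => neg_le_of_negRatio_le hlam hA (hmax hy)) hy
    rwa [finrank_euclideanSpace_fin] at this
  have houter {y : EuclideanSpace ℝ (Fin n)} (hy : y ∈ closedBall z d) :
      |ψ y| ≤ C * (2 ^ (n + 2) * A) :=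
    hψ.abs_le_of_closedBall hper hn hD hD0 hd hd' hinner hy
  refine ⟨hA.lt_of_ne fun h => ?_, fun y hy => ?_⟩
  · have := (le_abs_self (ψ x)).trans (houter hx)
    rw [← h, mul_zero, mul_zero] at this
    linarith
  · calc negRatio ψ lam z y ≤ 2 * (C * (2 ^ (n + 2) * A)) :=
          (negRatio_le_two_mul_abs ψ lam z y).trans (by linarith [houter hy])
      _ = 2 * (C * 2 ^ (n + 2)) * A := by ring
      _ ≤ 2 ^ growthExponent n D * A := by
          gcongr
          exact two_mul_pow_mul_two_pow_le n D

theorem IsEigenfunction.exists_finset_closedBall_neg (hψ : IsEigenfunction ψ lam)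
    (hper : ZnPeriodic n ψ) (hn : 0 < n) (hlam : 0 < lam) (hD : lam ≤ D ^ 2) (hD0 : 0 < D)
    (hd : 0 < d) (hd' : d ≤ 1 / 4) (hsmall : lam * d ^ 2 ≤ 1 / 100) (hz : ψ z = 0)
    (hx : x ∈ closedBall z d) (hxpos : 0 < ψ x) {K L : ℕ} (hK : 0 < K) (hL : 0 < L)
    (hKL : 2 * growthExponent n D ≤ K * L) :
    ∃ P : Finset (EuclideanSpace ℝ (Fin n)), P.card ≤ K ∧ K ≤ 2 * P.card ∧
      (∀ p ∈ P, p ∈ closedBall z d ∧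
        ∀ y ∈ closedBall p (d / (4 * K * L) / (20 * (n + 1))), ψ y < 0) ∧
      (P : Set (EuclideanSpace ℝ (Fin n))).Pairwise fun p q => d / (4 * K) ≤ dist p q := by
  classical
  set w : ℝ := d / (4 * K * L)
  obtain ⟨R, hRK, hKR, hR, hsep⟩ := exists_finset_radii_le_two_mul
    (continuous_negRatio hψ.continuous lam z) hd hK hL hKL fun p hp =>
      hψ.negRatio_growth hper hn hlam.le hD hD0 hd hd' hsmall hz hx hxpos hp
  have hpoint (r : ℝ) : ∃ p, r ∈ R → dist p z = r ∧
      ∀ y ∈ closedBall p (w / (20 * (n + 1))), ψ y < 0 := by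
    by_cases hr : r ∈ R
    swap
    · exact ⟨0, fun h => absurd h hr⟩
    obtain ⟨hrd, p, hp, hmax, hpos, hdouble⟩ := hR r hr
    have hr0 : 0 ≤ r := dist_nonneg.trans hp
    have hw : 0 < w := by positivity
    refine ⟨p, fun _ => ⟨hψ.dist_eq_of_isMaxOn_negRatio hlam (by simpa) ?_ hp hmax hpos,
      fun y hy => hψ.neg_of_isMaxOn_negRatio hlam.le hw hrd hsmall hp hpos hdouble (by simpa)⟩⟩
    refine le_trans ?_ hsmall
    gcongr
    linarith
  choose p hp using hpoint
  have hcard : (R.image p).card = R.card := Finset.card_image_of_injOn fun r hr r' hr' h => by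
    rw [← (hp r hr).1, h, (hp r' hr').1]
  refine ⟨R.image p, hcard.trans_le hRK, hcard.symm ▸ hKR, ?_, ?_⟩
  · simp only [Finset.forall_mem_image]
    refine fun r hr => ⟨(hp r hr).1.trans_le ?_, (hp r hr).2⟩
    exact (le_add_of_nonneg_right (by positivity)).trans (hR r hr).1
  · rw [Finset.coe_image]
    rintro _ ⟨r, hr, rfl⟩ _ ⟨r', hr', rfl⟩ h
    calc d / (4 * K) ≤ |r - r'| := hsep hr hr' fun h' => h (h' ▸ rfl)
      _ = |dist (p r) z - dist (p r') z| := by rw [(hp r hr).1, (hp r' hr').1]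
      _ ≤ dist (p r) (p r') := abs_dist_sub_le _ _ _

end Periodic

end SignChange

section NodalDomain

variable {n : ℕ} {ψ : EuclideanSpace ℝ (Fin n) → ℝ} {Ω : Set (EuclideanSpace ℝ (Fin n))}
  {x : EuclideanSpace ℝ (Fin n)}

namespace IsNodalDomain

theorem nonempty (hΩ : IsNodalDomain ψ Ω) : Ω.Nonempty := by
  obtain ⟨x, hx, rfl⟩ := hΩ
  exact ⟨x, mem_connectedComponentIn hx⟩

theorem ne_zero (hΩ : IsNodalDomain ψ Ω) (hx : x ∈ Ω) : ψ x ≠ 0 := by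
  obtain ⟨y, -, rfl⟩ := hΩ
  exact connectedComponentIn_subset _ _ hx

theorem isPreconnected (hΩ : IsNodalDomain ψ Ω) : IsPreconnected Ω := by
  obtain ⟨y, -, rfl⟩ := hΩ
  exact isPreconnected_connectedComponentIn

theorem isOpen (hΩ : IsNodalDomain ψ Ω) (hψ : Continuous ψ) : IsOpen Ω := by
  obtain ⟨y, -, rfl⟩ := hΩ
  exact (isOpen_ne.preimage hψ).connectedComponentIn

theorem neg (hΩ : IsNodalDomain ψ Ω) : IsNodalDomain (-ψ) Ω := by
  obtain ⟨y, hy, rfl⟩ := hΩ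
  exact ⟨y, by simpa using hy, by simp⟩

theorem subset_of_isPreconnected (hΩ : IsNodalDomain ψ Ω) {V : Set (EuclideanSpace ℝ (Fin n))}
    (hV : IsPreconnected V) (hΩV : Ω ⊆ V) (hV₀ : ∀ y ∈ V, ψ y ≠ 0) : V ⊆ Ω := by
  obtain ⟨y, hy, rfl⟩ := hΩ
  exact hV.subset_connectedComponentIn (hΩV (mem_connectedComponentIn hy)) hV₀

theorem eq_zero_of_mem_frontier (hΩ : IsNodalDomain ψ Ω) (hψ : Continuous ψ)
    (hx : x ∈ frontier Ω) : ψ x = 0 := by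
  rw [(hΩ.isOpen hψ).frontier_eq] at hx
  by_contra hne
  have hinsert : IsPreconnected (insert x Ω) := hΩ.isPreconnected.subset_closure
    (Set.subset_insert _ _) (Set.insert_subset hx.1 subset_closure)
  exact hx.2 (hΩ.subset_of_isPreconnected hinsert (Set.subset_insert _ _)
    (Set.forall_mem_insert.2 ⟨hne, fun _ => hΩ.ne_zero⟩) (Set.mem_insert _ _))

theorem ball_subset (hΩ : IsNodalDomain ψ Ω) (hx : x ∈ Ω) {d : ℝ} (hd : 0 < d)
    (hball : ∀ y ∈ ball x d, ψ y ≠ 0) : ball x d ⊆ Ω :=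
  Set.subset_union_right.trans <| hΩ.subset_of_isPreconnected
    (hΩ.isPreconnected.union x hx (mem_ball_self hd) (convex_ball x d).isPreconnected)
    Set.subset_union_left fun y hy => hy.elim hΩ.ne_zero (hball y)

theorem pos_or_neg (hΩ : IsNodalDomain ψ Ω) (hψ : Continuous ψ) :
    (∀ y ∈ Ω, 0 < ψ y) ∨ ∀ y ∈ Ω, 0 < (-ψ) y := by
  by_contra! h
  obtain ⟨⟨y, hy, hy₀⟩, z, hz, hz₀⟩ := h
  obtain ⟨w, hw, hw₀⟩ := hΩ.isPreconnected.intermediate_value hy hz hψ.continuousOn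
    ⟨hy₀, by simpa using hz₀⟩
  exact hΩ.ne_zero hw hw₀

end IsNodalDomain

theorem IsEigenfunction.exists_nonpos {lam : ℝ} (hψ : IsEigenfunction ψ lam)
    (hper : ZnPeriodic n ψ) (hlam : 0 < lam) : ∃ x, ψ x ≤ 0 := by
  obtain ⟨x, hx⟩ := hper.neg.exists_forall_ge hψ.neg.continuous
  have hΔ := laplacian_nonpos_of_isLocalMax hψ.neg.contDiff.contDiffAt
    (x := x) (Eventually.of_forall hx)
  rw [hψ.neg.laplacian_eq, Pi.neg_apply] at hΔ
  exact ⟨x, nonpos_of_mul_nonpos_right (by linarith) hlam⟩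

theorem IsEigenfunction.bddAbove_radii_of_pos {lam : ℝ} (hψ : IsEigenfunction ψ lam)
    (hper : ZnPeriodic n ψ) (hlam : 0 < lam) (hpos : ∀ y ∈ Ω, 0 < ψ y) :
    BddAbove {ρ : ℝ | 0 < ρ ∧ ∃ c, ball c ρ ⊆ Ω} := by
  refine ⟨√n, ?_⟩
  rintro ρ ⟨-, c, hc⟩
  by_contra! hlt
  obtain ⟨x, hx⟩ := hψ.exists_nonpos hper hlam
  obtain ⟨y, hy, hyx⟩ := hper.exists_mem_closedBall_eq x c
  exact (hpos y (hc (closedBall_subset_ball hlt hy))).not_ge (hyx ▸ hx)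

theorem IsEigenfunction.bddAbove_radii_of_isNodalDomain {lam : ℝ} (hψ : IsEigenfunction ψ lam)
    (hper : ZnPeriodic n ψ) (hlam : 0 < lam) (hΩ : IsNodalDomain ψ Ω) :
    BddAbove {ρ : ℝ | 0 < ρ ∧ ∃ c, ball c ρ ⊆ Ω} :=
  (hΩ.pos_or_neg hψ.continuous).elim (hψ.bddAbove_radii_of_pos hper hlam)
    (hψ.neg.bddAbove_radii_of_pos hper.neg hlam)

end NodalDomain

section NewtonPotential

variable {E : Type*} [NormedAddCommGroup E] {P : Finset E} {k : ℕ} {y : E}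

/-- The potential `∑ p ∈ P, ‖y - p‖ ^ (-k)` of unit charges at the points of `P`. It is Newtonian
(harmonic away from `P`) when `k` is the dimension of the space minus two; at a point of `P` the
singular term is `0` if `0 < k`. -/
def newtonPotential (P : Finset E) (k : ℕ) (y : E) : ℝ := ∑ p ∈ P, (‖y - p‖ ^ k)⁻¹

theorem newtonPotential_le_of_forall_le {r : ℝ} (hr : 0 < r) (hy : ∀ p ∈ P, r ≤ dist y p) :
    newtonPotential P k y ≤ P.card * (r ^ k)⁻¹ := by
  rw [newtonPotential, ← nsmul_eq_mul]
  refine Finset.sum_le_card_nsmul _ _ _ fun p hp => ?_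
  have := hy p hp
  rw [dist_eq_norm] at this
  gcongr

theorem le_newtonPotential_of_forall_le {r : ℝ} (hy₀ : y ∉ P) (hy : ∀ p ∈ P, dist y p ≤ r) :
    P.card * (r ^ k)⁻¹ ≤ newtonPotential P k y := by
  rw [newtonPotential, ← nsmul_eq_mul]
  refine Finset.card_nsmul_le_sum _ _ _ fun p hp => ?_
  have hpos : 0 < ‖y - p‖ := norm_sub_pos_iff.2 (ne_of_mem_of_not_mem hp hy₀).symm
  have := hy p hp
  rw [dist_eq_norm] at this
  gcongr

theorem two_mul_card_mul_le_newtonPotential {d : ℝ} (hd : 0 < d) (hk : 1 ≤ k) (hy₀ : y ∉ P)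
    (hy : ∀ p ∈ P, dist y p ≤ 2 * d) :
    2 * (P.card * ((4 * d) ^ k)⁻¹) ≤ newtonPotential P k y := by
  have htwo : 2 * (2 ^ k)⁻¹ ≤ (1 : ℝ) := by
    rw [mul_inv_le_iff₀ (by positivity), one_mul]
    exact le_self_pow₀ one_le_two (by omega)
  calc 2 * (P.card * ((4 * d) ^ k)⁻¹) = 2 * (2 ^ k)⁻¹ * (P.card * ((2 * d) ^ k)⁻¹) := by
        rw [show 4 * d = 2 * (2 * d) by ring, mul_pow 2 (2 * d), mul_inv]
        ring
    _ ≤ P.card * ((2 * d) ^ k)⁻¹ := mul_le_of_le_one_left (by positivity) htwo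
    _ ≤ newtonPotential P k y := le_newtonPotential_of_forall_le hy₀ hy

-- At most one charge lies within `σ / 2` of `y`.
theorem newtonPotential_le_of_pairwise {τ σ : ℝ} (hτ : 0 < τ) (hσ : 0 < σ)
    (hsep : (P : Set E).Pairwise fun p q => σ ≤ dist p q) (hy : ∀ p ∈ P, τ ≤ dist y p) :
    newtonPotential P k y ≤ (τ ^ k)⁻¹ + P.card * ((σ / 2) ^ k)⁻¹ := by
  classical
  by_cases hnear : ∃ p ∈ P, dist y p < σ / 2
  · obtain ⟨p, hp, hpy⟩ := hnear
    have herase : newtonPotential (P.erase p) k y ≤ P.card * ((σ / 2) ^ k)⁻¹ := by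
      refine (newtonPotential_le_of_forall_le (half_pos hσ) fun q hq => ?_).trans ?_
      · obtain ⟨hqp, hq⟩ := Finset.mem_erase.1 hq
        linarith [hsep hp hq hqp.symm, dist_triangle_left p q y]
      · gcongr
        exact Finset.erase_subset _ _
    have hpτ := hy p hp
    rw [dist_eq_norm] at hpτ
    rw [newtonPotential, ← Finset.add_sum_erase _ _ hp]
    exact add_le_add (by gcongr) herase
  · push Not at hnear
    exact (newtonPotential_le_of_forall_le (half_pos hσ) hnear).trans
      (le_add_of_nonneg_left (by positivity))

variable [InnerProductSpace ℝ E] [FiniteDimensional ℝ E]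

theorem harmonicAt_newtonPotential (hk : finrank ℝ E = k + 2) (hy : y ∉ P) :
    HarmonicAt (newtonPotential P k) y := by
  induction P using Finset.cons_induction with
  | empty =>
    have hzero : newtonPotential (∅ : Finset E) k = fun _ => 0 := by
      ext
      simp [newtonPotential]
    simp [hzero, HarmonicAt, contDiffAt_const, laplacian_const]
  | cons p P hp ih =>
    rw [Finset.mem_cons, not_or] at hy
    have hsum : newtonPotential (Finset.cons p P hp) k
        = (fun z => (‖z - p‖ ^ k)⁻¹) + newtonPotential P k := by
      ext z
      simp [newtonPotential]
    rw [hsum]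
    exact (harmonicAt_inv_norm_sub_pow hk hy.1).add (ih hy.2)

end NewtonPotential

section Barrier

variable {E : Type*} [NormedAddCommGroup E] [InnerProductSpace ℝ E]
  {ψ : E → ℝ} {lam S κ : ℝ} {P : Finset E} {k : ℕ} {x₀ : E}

/-- The comparison function `ψ + κ ∑ p ∈ P, ‖x - p‖ ^ (-k) + λ S ‖x - x₀‖² / dim E`; the quadratic
term makes it strictly subharmonic where `ψ < 2 S`. -/
def barrier (ψ : E → ℝ) (lam S κ : ℝ) (P : Finset E) (k : ℕ) (x₀ x : E) : ℝ :=
  ψ x + κ * newtonPotential P k x + lam * S / finrank ℝ E * ‖x - x₀‖ ^ 2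

theorem barrier_le_of_le {y : E} {N A r : ℝ} (hlam : 0 ≤ lam) (hS : 0 ≤ S) (hκ : 0 ≤ κ)
    (hψ : ψ y ≤ A) (hN : newtonPotential P k y ≤ N) (hr : dist y x₀ ≤ r) :
    barrier ψ lam S κ P k x₀ y ≤ A + κ * N + lam * S / finrank ℝ E * r ^ 2 := by
  rw [dist_eq_norm] at hr
  unfold barrier
  gcongr

theorem barrier_le_of_mem_frontier {Ω : Set E} {y : E} {d τ σ : ℝ} (hlam : 0 ≤ lam) (hS : 0 ≤ S)
    (hd : 0 < d) (hτ : 0 < τ) (hσ : 0 < σ) (hψS : ∀ y ∈ closure Ω, ψ y ≤ S)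
    (hzero : ∀ y ∈ frontier Ω, ψ y = 0) (hP : ∀ p ∈ P, dist p x₀ ≤ 2 * d)
    (hfar : ∀ y ∈ closure Ω, ∀ p ∈ P, τ ≤ dist y p)
    (hsep : (P : Set E).Pairwise fun p q => σ ≤ dist p q)
    (hκ : κ * ((τ ^ k)⁻¹ + P.card * ((σ / 2) ^ k)⁻¹) = S)
    (hy : y ∈ frontier (Ω ∩ ball x₀ (6 * d))) :
    barrier ψ lam S κ P k x₀ y
      ≤ S + κ * (P.card * ((4 * d) ^ k)⁻¹) + lam * S / finrank ℝ E * (6 * d) ^ 2 := by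
  have hκ₀ : 0 ≤ κ := by
    rw [← hκ] at hS
    exact nonneg_of_mul_nonneg_left hS (by positivity)
  rcases frontier_inter_subset _ _ hy with ⟨hyΩ, hyd⟩ | ⟨hyΩ, hyd⟩
  · have hN : newtonPotential P k y ≤ _ := newtonPotential_le_of_pairwise hτ hσ hsep
      (hfar y (frontier_subset_closure hyΩ))
    have h := barrier_le_of_le hlam hS hκ₀ (hzero y hyΩ).le hN (closure_ball_subset_closedBall hyd)
    have : 0 ≤ κ * (P.card * ((4 * d) ^ k)⁻¹) := by positivity
    linarith
  · have hsphere : dist y x₀ = 6 * d := frontier_ball_subset_sphere hyd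
    refine barrier_le_of_le hlam hS hκ₀ (hψS y hyΩ) ?_ hsphere.le
    refine newtonPotential_le_of_forall_le (by positivity) fun p hp => ?_
    linarith [hP p hp, dist_triangle y p x₀]

variable [FiniteDimensional ℝ E]

theorem contDiffAt_barrier (hψ : ContDiff ℝ 2 ψ) (hk : finrank ℝ E = k + 2) {y : E}
    (hy : y ∉ P) : ContDiffAt ℝ 2 (barrier ψ lam S κ P k x₀) y :=
  (hψ.contDiffAt.add (contDiffAt_const.mul (harmonicAt_newtonPotential hk hy).1)).add
    (contDiffAt_const.mul (contDiff_norm_sub_sq x₀).contDiffAt)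

theorem IsEigenfunction.laplacian_barrier (hψ : IsEigenfunction ψ lam)
    (hk : finrank ℝ E = k + 2) {y : E} (hy : y ∉ P) :
    Δ (barrier ψ lam S κ P k x₀) y = lam * (2 * S - ψ y) := by
  have hψy : ContDiffAt ℝ 2 ψ y := hψ.contDiff.contDiffAt
  have hN := harmonicAt_newtonPotential hk hy
  have hκN : ContDiffAt ℝ 2 (κ • newtonPotential P k) y := contDiffAt_const.smul hN.1
  have hψN : ContDiffAt ℝ 2 (ψ + κ • newtonPotential P k) y := hψy.add hκN
  have hq : ContDiffAt ℝ 2 (fun x => ‖x - x₀‖ ^ 2) y := (contDiff_norm_sub_sq x₀).contDiffAt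
  have hcq : ContDiffAt ℝ 2 ((lam * S / finrank ℝ E) • fun x : E => ‖x - x₀‖ ^ 2) y :=
    contDiffAt_const.smul hq
  have hdim : (finrank ℝ E : ℝ) ≠ 0 := by
    rw [hk]
    positivity
  have hsum : barrier ψ lam S κ P k x₀ = ψ + κ • newtonPotential P k
      + (lam * S / finrank ℝ E) • fun x => ‖x - x₀‖ ^ 2 := rfl
  rw [hsum, hψN.laplacian_add hcq, hψy.laplacian_add hκN, laplacian_smul κ hN.1,
    laplacian_smul _ hq, hN.2.self_of_nhds, hψ.laplacian_eq, laplacian_norm_sub_sq]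
  simp only [Pi.zero_apply, smul_eq_mul, mul_zero, add_zero]
  field_simp
  ring

theorem IsEigenfunction.barrier_le_of_frontier_le (hψ : IsEigenfunction ψ lam)
    (hk : finrank ℝ E = k + 2) (hlam : 0 < lam) {U : Set E} (hbdd : Bornology.IsBounded U)
    (hopen : IsOpen U) (hS : ∀ y ∈ U, ψ y < 2 * S) (hP : ∀ p ∈ P, p ∉ closure U) {C : ℝ}
    (hC : ∀ y ∈ frontier U, barrier ψ lam S κ P k x₀ y ≤ C) {x : E} (hx : x ∈ U) :
    barrier ψ lam S κ P k x₀ x ≤ C := by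
  have hcont (y : E) (hy : y ∈ closure U) : ContDiffAt ℝ 2 (barrier ψ lam S κ P k x₀) y :=
    contDiffAt_barrier hψ.contDiff hk fun hyP => hP y hyP hy
  refine le_of_laplacian_pos_of_frontier_le hbdd hopen
    (fun y hy => (hcont y hy).continuousAt.continuousWithinAt)
    (fun y hy => hcont y (subset_closure hy)) (fun y hy => ?_) hC hx
  rw [hψ.laplacian_barrier hk fun hyP => hP y hyP (subset_closure hy)]
  exact mul_pos hlam (by linarith [hS y hy])

-- The charges are within `2 * d` of `x₀` but `4 * d` away from the sphere of radius `6 * d`, which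
-- at least halves their potential.
theorem IsEigenfunction.card_mul_le_of_neg_on_closedBalls (hψ : IsEigenfunction ψ lam)
    (hk : finrank ℝ E = k + 2) (hk₁ : 1 ≤ k) (hlam : 0 < lam) {Ω : Set E} (hΩ : IsOpen Ω)
    (hpos : ∀ y ∈ Ω, 0 < ψ y) (hzero : ∀ y ∈ frontier Ω, ψ y = 0) (hS : ∀ y ∈ Ω, ψ y ≤ S)
    (hx₀ : x₀ ∈ Ω) {θ d τ σ : ℝ} (hθ : (1 - θ) * S ≤ ψ x₀) (hd : 0 < d) (hτ : 0 < τ) (hσ : 0 < σ)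
    (hP : ∀ p ∈ P, dist p x₀ ≤ 2 * d) (hneg : ∀ p ∈ P, ∀ y ∈ closedBall p τ, ψ y < 0)
    (hsep : (P : Set E).Pairwise fun p q => σ ≤ dist p q) :
    P.card * ((4 * d) ^ k)⁻¹ ≤ (θ + 36 * (lam / finrank ℝ E) * d ^ 2)
      * ((τ ^ k)⁻¹ + P.card * ((σ / 2) ^ k)⁻¹) := by
  set T := (τ ^ k)⁻¹ + P.card * ((σ / 2) ^ k)⁻¹ with hT
  have hT₀ : 0 < T := by positivity
  have hS₀ : 0 < S := (hpos x₀ hx₀).trans_le (hS x₀ hx₀)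
  have hclosure : closure Ω ⊆ ψ ⁻¹' Set.Icc 0 S :=
    closure_minimal (fun y hy => ⟨(hpos y hy).le, hS y hy⟩) (isClosed_Icc.preimage hψ.continuous)
  have hfar (y : E) (hy : y ∈ closure Ω) (p : E) (hp : p ∈ P) : τ ≤ dist y p := by
    by_contra! hlt
    exact (hneg p hp y hlt.le).not_ge (hclosure hy).1
  have hnotMem (y : E) (hy : y ∈ closure Ω) : y ∉ P := fun hyP => by
    simpa using hτ.trans_le (hfar y hy y hyP)
  have hmax := hψ.barrier_le_of_frontier_le hk hlam (isBounded_ball.subset Set.inter_subset_right)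
    (hΩ.inter isOpen_ball) (fun y hy => by linarith [hS y hy.1])
    (fun p hp hcl => hnotMem p (closure_mono Set.inter_subset_left hcl) hp)
    (fun y => barrier_le_of_mem_frontier hlam.le hS₀.le hd hτ hσ (fun y hy => (hclosure hy).2)
      hzero hP hfar hsep (div_mul_cancel₀ S hT₀.ne'))
    ⟨hx₀, mem_ball_self (by positivity)⟩
  have hlower := mul_le_mul_of_nonneg_left
    (two_mul_card_mul_le_newtonPotential hd hk₁ (hnotMem x₀ (subset_closure hx₀)) fun p hp => by
      simpa only [dist_comm] using hP p hp) (div_pos hS₀ hT₀).le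
  simp only [barrier, sub_self, norm_zero] at hmax
  refine (div_le_iff₀ hT₀).1 (le_of_mul_le_mul_left ?_ hS₀)
  calc S * (P.card * ((4 * d) ^ k)⁻¹ / T) = S / T * (P.card * ((4 * d) ^ k)⁻¹) := by ring
    _ ≤ θ * S + lam * S / finrank ℝ E * (6 * d) ^ 2 := by linarith
    _ = S * (θ + 36 * (lam / finrank ℝ E) * d ^ 2) := by ring

end Barrier

section InnerRadius

theorem exists_mem_one_sub_mul_sSup_lt {s : Set ℝ} (hs : BddAbove s) {x θ : ℝ} (hx : x ∈ s)
    (hx₀ : 0 < x) (hθ : 0 < θ) : ∃ y ∈ s, (1 - θ) * sSup s < y :=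
  exists_lt_of_lt_csSup ⟨x, hx⟩ (by nlinarith [le_csSup hs hx])

variable {k : ℕ}

theorem card_mul_inv_pow_le {ℓ g : ℕ} (hℓ : 1 ≤ ℓ) {R d : ℝ} (hR : 8 ≤ R) (hd : 0 < d)
    (hg : g ≤ ℓ ^ k) :
    g * ((d / (4 * ℓ ^ k) / 2) ^ k)⁻¹ ≤ ((d / (R * ℓ ^ (k + 2))) ^ k)⁻¹ := by
  have hℓ₁ : (1 : ℝ) ≤ ℓ := by exact_mod_cast hℓ
  have hgℓ : (g : ℝ) ≤ (ℓ : ℝ) ^ k := by exact_mod_cast hg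
  calc g * ((d / (4 * ℓ ^ k) / 2) ^ k)⁻¹ = g * (8 * ℓ ^ k) ^ k * (d ^ k)⁻¹ := by
        rw [div_div, div_pow, inv_div]
        ring
    _ ≤ ℓ ^ k * (R * ℓ ^ k) ^ k * (d ^ k)⁻¹ := by gcongr
    _ = (R * ℓ ^ (k + 1)) ^ k * (d ^ k)⁻¹ := by
        rw [pow_succ, ← mul_assoc, mul_pow (R * ℓ ^ k)]
        ring
    _ ≤ (R * ℓ ^ (k + 2)) ^ k * (d ^ k)⁻¹ := by
        gcongr (R * ?_) ^ k * (d ^ k)⁻¹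
        exact pow_le_pow_right₀ hℓ₁ (by omega)
    _ = ((d / (R * ℓ ^ (k + 2))) ^ k)⁻¹ := by rw [div_pow, inv_div, div_eq_mul_inv]

theorem one_le_of_card_mul_le {ℓ g : ℕ} (hℓ : 1 ≤ ℓ) {R d θ : ℝ} (hR : 8 ≤ R) (hd : 0 < d)
    (hθ : 0 ≤ θ) (hg : g ≤ ℓ ^ k) (hg' : ℓ ^ k ≤ 2 * g)
    (h : g * ((4 * d) ^ k)⁻¹ ≤ θ * (((d / (R * ℓ ^ (k + 2))) ^ k)⁻¹
      + g * ((d / (4 * ℓ ^ k) / 2) ^ k)⁻¹)) :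
    1 ≤ 4 * (4 * R) ^ k * (ℓ : ℝ) ^ ((k + 1) * k) * θ := by
  have hℓ₀ : (0 : ℝ) < ℓ := by exact_mod_cast hℓ
  have hℓg : (ℓ : ℝ) ^ k ≤ 2 * g := by exact_mod_cast hg'
  have hscale : (0 : ℝ) < ℓ ^ k * ((4 * d) ^ k)⁻¹ :=
    mul_pos (pow_pos hℓ₀ k) (by positivity)
  refine le_of_mul_le_mul_right ?_ hscale
  calc 1 * ((ℓ : ℝ) ^ k * ((4 * d) ^ k)⁻¹) ≤ 2 * (g * ((4 * d) ^ k)⁻¹) := by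
        rw [one_mul, ← mul_assoc]
        gcongr
    _ ≤ 4 * θ * ((d / (R * ℓ ^ (k + 2))) ^ k)⁻¹ := by
        linarith [mul_le_mul_of_nonneg_left (card_mul_inv_pow_le hℓ hR hd hg) hθ]
    _ = 4 * θ * ((R * (ℓ ^ (k + 1) * ℓ)) ^ k * (d ^ k)⁻¹) := by
        rw [div_pow, inv_div, ← pow_succ, div_eq_mul_inv]
    _ = 4 * (4 * R) ^ k * (ℓ : ℝ) ^ ((k + 1) * k) * θ * (ℓ ^ k * ((4 * d) ^ k)⁻¹) := by
        rw [pow_mul]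
        simp only [mul_pow]
        field_simp

variable {ψ : EuclideanSpace ℝ (Fin (k + 2)) → ℝ} {lam : ℝ}
  {Ω : Set (EuclideanSpace ℝ (Fin (k + 2)))}

theorem IsEigenfunction.one_le_of_eq_zero (hψ : IsEigenfunction ψ lam)
    (hper : ZnPeriodic (k + 2) ψ) (hk : 1 ≤ k) (hlam : 0 < lam) (hΩ : IsNodalDomain ψ Ω)
    (hpos : ∀ y ∈ Ω, 0 < ψ y) {S : ℝ} (hS : ∀ y ∈ Ω, ψ y ≤ S) {d : ℝ} (hd : 0 < d)
    (hd' : d ≤ 1 / 4) (hlamd : lam * d ^ 2 ≤ 1 / 100) {x₀ z : EuclideanSpace ℝ (Fin (k + 2))}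
    (hx₀ : x₀ ∈ Ω) (hmax : (1 - lam * d ^ 2) * S ≤ ψ x₀) (hz : ψ z = 0) (hdist : dist x₀ z ≤ d)
    {D ℓ : ℕ} (hD₀ : 0 < D) (hD : lam ≤ D ^ 2) (hℓ : 1 ≤ ℓ)
    (hgrowth : 2 * growthExponent (k + 2) D ≤ ℓ ^ (k + 2)) :
    1 ≤ 52 * (320 * (k + 3)) ^ k * (ℓ : ℝ) ^ ((k + 1) * k) * (lam * d ^ 2) := by
  obtain ⟨P, hPK, hKP, hP, hsep⟩ := hψ.exists_finset_closedBall_neg hper (by omega) hlam hD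
    hD₀ hd hd' hlamd hz hdist (hpos x₀ hx₀) (K := ℓ ^ k) (L := ℓ ^ 2) (by positivity)
    (by positivity) (by rwa [← pow_add])
  have hτ : d / (4 * (ℓ ^ k : ℕ) * (ℓ ^ 2 : ℕ)) / (20 * ((k + 2 : ℕ) + 1))
      = d / (80 * (k + 3) * ℓ ^ (k + 2)) := by
    rw [div_div]
    push_cast
    ring_nf
  rw [hτ] at hP
  have hcard := hψ.card_mul_le_of_neg_on_closedBalls finrank_euclideanSpace_fin hk hlam
    (hΩ.isOpen hψ.continuous) hpos (fun y => hΩ.eq_zero_of_mem_frontier hψ.continuous) hS hx₀ hmax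
    hd (by positivity) (by positivity)
    (fun p hp => by linarith [(hP p hp).1.out, dist_triangle_right p x₀ z])
    (fun p hp => (hP p hp).2) hsep
  have hdim : lam / finrank ℝ (EuclideanSpace ℝ (Fin (k + 2))) ≤ lam / 3 := by
    rw [finrank_euclideanSpace_fin]
    gcongr
    exact_mod_cast (by omega : 3 ≤ k + 2)
  have hθ : lam * d ^ 2 + 36 * (lam / finrank ℝ (EuclideanSpace ℝ (Fin (k + 2)))) * d ^ 2
      ≤ 13 * (lam * d ^ 2) := by
    linarith [mul_le_mul_of_nonneg_right hdim (sq_nonneg d)]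
  have hone := one_le_of_card_mul_le (θ := 13 * (lam * d ^ 2)) (R := 80 * (k + 3)) hℓ
    (by linarith [(Nat.cast_nonneg k : (0 : ℝ) ≤ k)]) hd (by positivity) hPK hKP
    (le_trans (by push_cast at hcard; exact hcard) (by gcongr))
  calc 1 ≤ _ := hone
    _ = _ := by
      rw [← mul_assoc (4 : ℝ) 80]
      ring

theorem IsEigenfunction.exists_ball_subset_of_pos (hψ : IsEigenfunction ψ lam)
    (hper : ZnPeriodic (k + 2) ψ) (hk : 1 ≤ k) (hlam : 1 ≤ lam) (hΩ : IsNodalDomain ψ Ω)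
    (hpos : ∀ y ∈ Ω, 0 < ψ y) {d : ℝ} (hd : 0 < d) {D ℓ : ℕ} (hD₀ : 0 < D) (hD : lam ≤ D ^ 2)
    (hℓ : 1 ≤ ℓ) (hgrowth : 2 * growthExponent (k + 2) D ≤ ℓ ^ (k + 2))
    (hsmall : 52 * (320 * (k + 3)) ^ k * (ℓ : ℝ) ^ ((k + 1) * k) * (lam * d ^ 2) < 1) :
    ∃ c, ball c d ⊆ Ω := by
  have hlamd : lam * d ^ 2 ≤ 1 / 100 := by
    have hbase : 2 ≤ (320 * ((k : ℝ) + 3)) ^ k :=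
      le_trans (by linarith [(Nat.cast_nonneg k : (0 : ℝ) ≤ k)])
        (le_self_pow₀ (by linarith [(Nat.cast_nonneg k : (0 : ℝ) ≤ k)]) (by omega))
    have hpow : (1 : ℝ) ≤ ℓ ^ ((k + 1) * k) := one_le_pow₀ (by exact_mod_cast hℓ)
    have hcoeff := mul_le_mul hbase hpow zero_le_one (by positivity)
    linarith [mul_le_mul_of_nonneg_right hcoeff (by positivity : 0 ≤ lam * d ^ 2)]
  obtain ⟨m, hm⟩ := hper.exists_forall_ge hψ.continuous
  have hbdd : BddAbove (ψ '' Ω) := ⟨ψ m, Set.forall_mem_image.2 fun y _ => hm y⟩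
  obtain ⟨x, hx⟩ := hΩ.nonempty
  obtain ⟨_, ⟨x₀, hx₀, rfl⟩, hmax⟩ := exists_mem_one_sub_mul_sSup_lt hbdd
    (Set.mem_image_of_mem ψ hx) (hpos x hx) (show 0 < lam * d ^ 2 by positivity)
  refine ⟨x₀, hΩ.ball_subset hx₀ hd fun z hz hz₀ => hsmall.not_ge ?_⟩
  exact hψ.one_le_of_eq_zero hper hk (by linarith) hΩ hpos
    (fun y hy => le_csSup hbdd (Set.mem_image_of_mem ψ hy)) hd (by nlinarith) hlamd hx₀ hmax.le
    hz₀ (mem_ball'.1 hz).le hD₀ hD hℓ hgrowth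

end InnerRadius

section Parameters

theorem two_mul_growthExponent_natCeil_sqrt_le (n : ℕ) {lam : ℝ} (hlam : 1 ≤ lam) :
    2 * (growthExponent n ⌈√lam⌉₊ : ℝ) ≤ (8 * n * (n + 5) + 2 * n + 6) * √lam := by
  have hsqrt : 1 ≤ √lam := one_le_sqrt.2 hlam
  have hceil : (⌈√lam⌉₊ : ℝ) ≤ 2 * √lam := Nat.ceil_le_two_mul (by linarith)
  have hrest : 2 * (n : ℝ) + 6 ≤ (2 * n + 6) * √lam := le_mul_of_one_le_right (by positivity) hsqrt
  have hmain := mul_le_mul_of_nonneg_left hceil (by positivity : (0 : ℝ) ≤ 4 * n * (n + 5))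
  simp only [growthExponent]
  push_cast
  linarith

theorem exists_growthExponent_le_pow {n : ℕ} (hn : 0 < n) :
    ∃ B : ℝ, 0 < B ∧ ∀ lam : ℝ, 1 ≤ lam → ∃ D ℓ : ℕ, 0 < D ∧ lam ≤ D ^ 2 ∧ 1 ≤ ℓ ∧
      2 * growthExponent n D ≤ ℓ ^ n ∧ (ℓ : ℝ) ≤ B * lam ^ (1 / (2 * n) : ℝ) := by
  set C : ℝ := 8 * n * (n + 5) + 2 * n + 6
  have hC₀ : 1 ≤ C := by
    have : (0 : ℝ) ≤ 8 * n * (n + 5) + 2 * n := by positivity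
    linarith
  refine ⟨2 * C ^ (1 / n : ℝ), by positivity, fun lam hlam => ?_⟩
  have hsqrt : 1 ≤ √lam := one_le_sqrt.2 hlam
  have hX : 1 ≤ C * √lam := one_le_mul_of_one_le_of_one_le hC₀ hsqrt
  have hroot : 1 ≤ (C * √lam) ^ (1 / n : ℝ) := one_le_rpow hX (by positivity)
  refine ⟨⌈√lam⌉₊, ⌈(C * √lam) ^ (1 / n : ℝ)⌉₊, Nat.ceil_pos.2 (by linarith), ?_,
    Nat.ceil_pos.2 (by linarith), ?_, ?_⟩
  · exact (sqrt_le_left (Nat.cast_nonneg _)).1 (Nat.le_ceil _)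
  · have hpow : C * √lam ≤ (⌈(C * √lam) ^ (1 / n : ℝ)⌉₊ : ℝ) ^ n := by
      calc C * √lam = ((C * √lam) ^ (1 / n : ℝ)) ^ n := by
            rw [one_div, rpow_inv_natCast_pow (by linarith) hn.ne']
        _ ≤ _ := by
            gcongr
            exact Nat.le_ceil _
    exact_mod_cast (two_mul_growthExponent_natCeil_sqrt_le n hlam).trans hpow
  · calc (⌈(C * √lam) ^ (1 / n : ℝ)⌉₊ : ℝ) ≤ 2 * (C * √lam) ^ (1 / n : ℝ) :=
          Nat.ceil_le_two_mul (by linarith)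
      _ = 2 * C ^ (1 / n : ℝ) * lam ^ (1 / (2 * n) : ℝ) := by
          rw [mul_rpow (by linarith) (sqrt_nonneg _), sqrt_eq_rpow, ← rpow_mul (by linarith),
            div_mul_div_comm, one_mul, mul_assoc]

theorem mul_sq_mul_rpow_eq {lam : ℝ} (hlam : 0 < lam) (a γ : ℝ) :
    lam * (a * lam ^ (-1 / 2 - γ / 2)) ^ 2 = a ^ 2 * lam ^ (-γ) := by
  have hsq : (lam ^ (-1 / 2 - γ / 2)) ^ 2 = lam ^ (-γ - 1) := by
    rw [← rpow_mul_natCast hlam.le]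
    congr 1
    push_cast
    ring
  rw [mul_pow, hsq, rpow_sub_one hlam.ne']
  field_simp

theorem exists_parameters {k : ℕ} {W : ℝ} (hW : 0 < W) :
    ∃ a : ℝ, 0 < a ∧ ∀ lam : ℝ, 1 ≤ lam → ∃ D ℓ : ℕ, 0 < D ∧ lam ≤ D ^ 2 ∧ 1 ≤ ℓ ∧
      2 * growthExponent (k + 2) D ≤ ℓ ^ (k + 2) ∧
      W * (ℓ : ℝ) ^ ((k + 1) * k)
        * (lam * (a * lam ^ (-1 / 2 - (k + 1) * k / (4 * (k + 2)) : ℝ)) ^ 2) < 1 := by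
  obtain ⟨B, hB, hparam⟩ := exists_growthExponent_le_pow (n := k + 2) (by omega)
  set M := W * B ^ ((k + 1) * k) with hM
  have hM₀ : 0 < M := by positivity
  refine ⟨(1 + M)⁻¹, by positivity, fun lam hlam => ?_⟩
  have hlam₀ : 0 < lam := by linarith
  obtain ⟨D, ℓ, hD₀, hD, hℓ, hgrowth, hℓB⟩ := hparam lam hlam
  refine ⟨D, ℓ, hD₀, hD, hℓ, hgrowth, ?_⟩
  set γ : ℝ := (k + 1) * k / (2 * (k + 2)) with hγ
  have hℓpow : (ℓ : ℝ) ^ ((k + 1) * k) ≤ B ^ ((k + 1) * k) * lam ^ γ := by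
    calc (ℓ : ℝ) ^ ((k + 1) * k) ≤ (B * lam ^ (1 / (2 * (k + 2 : ℕ)) : ℝ)) ^ ((k + 1) * k) := by
          gcongr
      _ = B ^ ((k + 1) * k) * lam ^ γ := by
          rw [mul_pow, ← rpow_mul_natCast hlam₀.le, hγ]
          push_cast
          ring_nf
  rw [show ((k : ℝ) + 1) * k / (4 * (k + 2)) = γ / 2 by rw [hγ]; field_simp; norm_num,
    mul_sq_mul_rpow_eq hlam₀]
  calc W * (ℓ : ℝ) ^ ((k + 1) * k) * ((1 + M)⁻¹ ^ 2 * lam ^ (-γ))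
      ≤ W * (B ^ ((k + 1) * k) * lam ^ γ) * ((1 + M)⁻¹ ^ 2 * lam ^ (-γ)) := by gcongr
    _ = M * (1 + M)⁻¹ ^ 2 := by
        rw [rpow_neg hlam₀.le, hM]
        field_simp
    _ < 1 := by
        rw [inv_pow, mul_inv_lt_iff₀ (by positivity)]
        nlinarith

end Parameters

theorem exists_ball_subset_nodalDomain {k : ℕ} (hk : 1 ≤ k) :
    ∃ a : ℝ, 0 < a ∧ ∀ (ψ : EuclideanSpace ℝ (Fin (k + 2)) → ℝ) (lam : ℝ), 1 ≤ lam →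
      IsEigenfunction ψ lam → ZnPeriodic (k + 2) ψ → ∀ Ω, IsNodalDomain ψ Ω →
        ∃ c, ball c (a * lam ^ (-1 / 2 - (k + 1) * k / (4 * (k + 2)) : ℝ)) ⊆ Ω := by
  obtain ⟨a, ha, hparam⟩ := exists_parameters (k := k)
    (by positivity : (0 : ℝ) < 52 * (320 * (k + 3)) ^ k)
  refine ⟨a, ha, fun ψ lam hlam hψ hper Ω hΩ => ?_⟩
  obtain ⟨D, ℓ, hD₀, hD, hℓ, hgrowth, hsmall⟩ := hparam lam hlam
  rcases hΩ.pos_or_neg hψ.continuous with hpos | hneg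
  · exact hψ.exists_ball_subset_of_pos hper hk hlam hΩ hpos (by positivity) hD₀ hD hℓ hgrowth hsmall
  · exact hψ.neg.exists_ball_subset_of_pos hper.neg hk hlam hΩ.neg hneg (by positivity) hD₀ hD hℓ
      hgrowth hsmall

theorem lap_eq_laplacian {n : ℕ} {f : EuclideanSpace ℝ (Fin n) → ℝ} (hf : ContDiff ℝ 2 f) :
    lap n f = Δ f := by
  ext x
  simp [lap, laplacian_eq_iteratedFDeriv_orthonormalBasis f (EuclideanSpace.basisFun (Fin n) ℝ),
    iteratedFDeriv_two_eq_fderiv_fderiv_apply hf]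

theorem mangoubi_inner_radius_lower_bound
    (n : ℕ) (hn : 3 ≤ n) :
    ∃ a₁ : ℝ, 0 < a₁ ∧
      ∀ (ψ : EuclideanSpace ℝ (Fin n) → ℝ) (lam : ℝ),
        1 ≤ lam → ContDiff ℝ (⊤ : ℕ∞) ψ → ZnPeriodic n ψ →
        (∀ x, lap n ψ x = -lam * ψ x) →
        ∀ Ω, IsNodalDomain ψ Ω →
          a₁ * lam ^ (-(1:ℝ)/2 - ((n:ℝ)-1)*((n:ℝ)-2)/(4*(n:ℝ))) ≤ innerRadius Ω := by
  obtain ⟨k, rfl⟩ : ∃ k, n = k + 2 := ⟨n - 2, by omega⟩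
  obtain ⟨a, ha, hball⟩ := exists_ball_subset_nodalDomain (k := k) (by omega)
  refine ⟨a, ha, fun ψ lam hlam hsmooth hper hlap Ω hΩ => ?_⟩
  have hsmooth₂ : ContDiff ℝ 2 ψ := contDiff_infty.1 hsmooth 2
  have hψ : IsEigenfunction ψ lam := ⟨hsmooth₂, fun x => lap_eq_laplacian hsmooth₂ ▸ hlap x⟩
  have hexp : -(1 : ℝ) / 2 - (((k + 2 : ℕ) : ℝ) - 1) * (((k + 2 : ℕ) : ℝ) - 2)
      / (4 * ((k + 2 : ℕ) : ℝ)) = -1 / 2 - (k + 1) * k / (4 * (k + 2)) := by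
    push_cast
    ring
  rw [hexp]
  exact le_csSup (hψ.bddAbove_radii_of_isNodalDomain hper (by linarith) hΩ)
    ⟨by positivity, hball ψ lam hlam hψ hper Ω hΩ⟩
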